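/- arXiv:math/0410282 — 5 statements merged into one kernel-verified Lean document; each statement's English description precedes it below -/
import Mathlib

section
/- Let f : {−1,1}^n → {−1,1} be monotone (f(x) ≥ f(y) whenever x_i ≥ y_i for all i) and let A be a randomized decision-tree algorithm such that every decision tree in the support of A computes f exactly on every input, with revealment δ. Then Var(f) ≤ δ^{3/2} · n^{1/2}. In particular, a balanced monotone Boolean function computed exactly by a randomized algorithm requires δ ≥ Ω(n^{-1/3}). -/
/-- A deterministic decision tree on `n` bits: a leaf outputs a Boolean value, an
internal node queries a bit and branches on its value. -/
inductive DTree (n : ℕ) : Type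
  | leaf : Bool → DTree n
  | node : Fin n → DTree n → DTree n → DTree n

namespace DTree

/-- The output of a decision tree on input `x`. -/
def eval {n : ℕ} : DTree n → (Fin n → Bool) → Bool
  | .leaf b, _ => b
  | .node i t0 t1, x => if x i then t1.eval x else t0.eval x

/-- Whether the decision tree reads bit `j` when run on input `x`. -/
def readsBit {n : ℕ} : DTree n → (Fin n → Bool) → Fin n → Bool
  | .leaf _, _, _ => false
  | .node i t0 t1, x, j =>
      (i == j) || (if x i then t1.readsBit x j else t0.readsBit x j)

end DTree

/-- A randomized decision-tree algorithm: a (finitely supported) probability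
distribution over deterministic decision trees. -/
structure RandAlg (n : ℕ) where
  m : ℕ
  tree : Fin m → DTree n
  w : Fin m → ℝ
  w_nonneg : ∀ r, 0 ≤ w r
  w_sum : ∑ r, w r = 1

/-- `readProb A i` is the probability δ_i that bit `i` is read, over a uniformly
random input and the internal randomness of the algorithm. -/
noncomputable def readProb {n : ℕ} (A : RandAlg n) (i : Fin n) : ℝ :=
  (∑ r, ∑ x : Fin n → Bool, if (A.tree r).readsBit x i then A.w r else 0) / 2 ^ n

/-- The probability that the algorithm's output differs from `f`, over a uniformly
random input and the internal randomness of the algorithm. -/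
noncomputable def errProb {n : ℕ} (A : RandAlg n) (f : (Fin n → Bool) → Bool) : ℝ :=
  (∑ r, ∑ x : Fin n → Bool, if (A.tree r).eval x ≠ f x then A.w r else 0) / 2 ^ n

/-- A Boolean function is balanced if it takes the value `true` on exactly half
of all inputs. -/
def balanced {n : ℕ} (f : (Fin n → Bool) → Bool) : Prop :=
  2 * Nat.card {x : Fin n → Bool // f x = true} = 2 ^ n

/-- A Boolean function is monotone if it is order preserving coordinatewise. -/
def monotoneBF {n : ℕ} (f : (Fin n → Bool) → Bool) : Prop :=
  ∀ x y : Fin n → Bool, (∀ i, x i ≤ y i) → f x ≤ f y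

/-- The ±1 encoding of a Boolean value. -/
noncomputable def pm (b : Bool) : ℝ := if b then 1 else -1

/-- The variance of the ±1-valued function corresponding to `f`, for a uniformly
random input. -/
noncomputable def pmVar {n : ℕ} (f : (Fin n → Bool) → Bool) : ℝ :=
  (∑ x : Fin n → Bool, pm (f x) ^ 2) / 2 ^ n
    - ((∑ x : Fin n → Bool, pm (f x)) / 2 ^ n) ^ 2

namespace DTree

/-- size -/
def sz {n : ℕ} : DTree n → ℕ
  | .leaf _ => 0
  | .node _ t0 t1 => t0.sz + t1.sz + 1

/-- restriction of a tree to `x i = b` -/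
def restr {n : ℕ} (i : Fin n) (b : Bool) : DTree n → DTree n
  | .leaf c => .leaf c
  | .node k t0 t1 =>
      if k = i then (if b then t1.restr i b else t0.restr i b)
      else .node k (t0.restr i b) (t1.restr i b)

theorem sz_restr {n : ℕ} (i : Fin n) (b : Bool) (t : DTree n) : (t.restr i b).sz ≤ t.sz := by
  induction t with
  | leaf c => simp [restr]
  | node k t0 t1 h0 h1 =>
    simp only [restr]
    split_ifs <;> simp only [sz] <;> omega

theorem eval_restr {n : ℕ} (i : Fin n) (b : Bool) (t : DTree n) (x : Fin n → Bool) :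
    (t.restr i b).eval x = t.eval (Function.update x i b) := by
  induction t with
  | leaf c => simp [restr, eval]
  | node k t0 t1 h0 h1 =>
    by_cases hk : k = i
    · subst hk
      cases b <;> simp [restr, eval, h0, h1]
    · simp [restr, eval, h0, h1, hk]

theorem reads_restr {n : ℕ} (i : Fin n) (b : Bool) (t : DTree n) (x : Fin n → Bool) (j : Fin n) :
    (t.restr i b).readsBit x j = (decide (i ≠ j) && t.readsBit (Function.update x i b) j) := by
  induction t with
  | leaf c => simp [restr, readsBit]
  | node k t0 t1 h0 h1 =>
    by_cases hk : k = i
    · subst hk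
      by_cases hj : k = j
      · subst hj
        cases b <;> simp [restr, readsBit, h0, h1]
      · cases b <;> simp [restr, readsBit, h0, h1, hj]
    · by_cases hj : i = j
      · subst hj
        simp [restr, readsBit, h0, h1, hk]
      · simp [restr, readsBit, h0, h1, hk, hj]

end DTree

noncomputable def ex {n : ℕ} (φ : (Fin n → Bool) → ℝ) : ℝ := (∑ x, φ x) / 2 ^ n

theorem ex_add {n : ℕ} (φ ψ : (Fin n → Bool) → ℝ) :
    ex (fun x => φ x + ψ x) = ex φ + ex ψ := by
  simp [ex, Finset.sum_add_distrib, add_div]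

theorem ex_sub {n : ℕ} (φ ψ : (Fin n → Bool) → ℝ) :
    ex (fun x => φ x - ψ x) = ex φ - ex ψ := by
  simp [ex, Finset.sum_sub_distrib, sub_div]

theorem ex_mul {n : ℕ} (c : ℝ) (φ : (Fin n → Bool) → ℝ) :
    ex (fun x => c * φ x) = c * ex φ := by
  simp [ex, ← Finset.mul_sum, mul_div_assoc]

theorem ex_const {n : ℕ} (c : ℝ) : ex (fun _ : Fin n → Bool => c) = c := by
  simp [ex]

theorem ex_mono {n : ℕ} {φ ψ : (Fin n → Bool) → ℝ} (h : ∀ x, φ x ≤ ψ x) : ex φ ≤ ex ψ := by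
  unfold ex
  gcongr with x _
  exact h x

theorem ex_sum {n : ℕ} {ι : Type} (s : Finset ι) (φ : ι → (Fin n → Bool) → ℝ) :
    ex (fun x => ∑ j ∈ s, φ j x) = ∑ j ∈ s, ex (φ j) := by
  unfold ex
  rw [Finset.sum_comm, Finset.sum_div]

theorem ex_split {n : ℕ} (i : Fin n) (φ : (Fin n → Bool) → ℝ) :
    ex φ = (ex (fun x => φ (Function.update x i true))
      + ex (fun x => φ (Function.update x i false))) / 2 := by
  have hinv : Function.Involutive (fun x : Fin n → Bool => Function.update x i (!x i)) := by
    intro x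
    simp
  have h1 : ∑ x, φ (Function.update x i (!x i)) = ∑ x, φ x :=
    Equiv.sum_comp hinv.toPerm φ
  have h2 : ∑ x, (φ (Function.update x i true) + φ (Function.update x i false))
      = ∑ x, (φ x + φ (Function.update x i (!x i))) := by
    refine Finset.sum_congr rfl fun x _ => ?_
    have hx : Function.update x i (x i) = x := Function.update_eq_self i x
    cases h : x i
    · rw [h] at hx
      rw [hx]; simp [add_comm]
    · rw [h] at hx
      rw [hx]; simp
  rw [Finset.sum_add_distrib, Finset.sum_add_distrib, h1] at h2
  unfold ex
  rw [← add_div, h2]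
  ring

noncomputable def del {n : ℕ} (t : DTree n) (j : Fin n) : ℝ :=
  ex (fun x => if t.readsBit x j then 1 else 0)

theorem del_node {n : ℕ} (i : Fin n) (t0 t1 : DTree n) (j : Fin n) :
    del (.node i t0 t1) j = (if i = j then 1 else 0)
      + (del (t1.restr i true) j + del (t0.restr i false) j) / 2 := by
  unfold del
  rw [ex_split i]
  by_cases h : i = j
  · subst h
    simp [DTree.readsBit, DTree.reads_restr, ex_const]
  · simp [DTree.readsBit, DTree.reads_restr, h]

noncomputable def infl {n : ℕ} (h : (Fin n → Bool) → ℝ) (j : Fin n) : ℝ :=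
  ex (fun x => |h (Function.update x j true) - h (Function.update x j false)| / 2)

theorem infl_eq {n : ℕ} (h : (Fin n → Bool) → ℝ) (i : Fin n) (b : Bool) :
    ex (fun x => |h (Function.update x i b) - h x|) = infl h i := by
  rw [ex_split i]
  unfold infl
  rw [← ex_add, div_eq_inv_mul, ← ex_mul]
  congr 1
  funext x
  cases b
  · simp [abs_sub_comm]; ring
  · simp; ring

theorem pm_abs (b : Bool) : |pm b| = 1 := by cases b <;> simp [pm]

theorem osss {n : ℕ} (h : (Fin n → Bool) → ℝ) : ∀ (N : ℕ) (t : DTree n), t.sz ≤ N →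
    ex (fun x => pm (t.eval x) * h x) - ex (fun x => pm (t.eval x)) * ex h
      ≤ ∑ j, del t j * infl h j := by
  intro N
  induction N with
  | zero =>
    intro t ht
    cases t with
    | leaf c => simp [DTree.eval, ex_mul, ex_const, del, DTree.readsBit]
    | node => simp [DTree.sz] at ht
  | succ N ih =>
    intro t ht
    cases t with
    | leaf c => simp [DTree.eval, ex_mul, ex_const, del, DTree.readsBit]
    | node i t0 t1 =>
      simp only [DTree.sz] at ht
      have hs : ∀ (b : Bool) (t : DTree n), t.sz ≤ N →
          ex (fun x => pm (t.eval (Function.update x i b)) * h (Function.update x i b))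
           - ex (fun x => pm (t.eval (Function.update x i b))) * ex h
          ≤ infl h i + ∑ j, del (t.restr i b) j * infl h j := by
        intro b t htN
        have := ih (t.restr i b) ((DTree.sz_restr i b t).trans htN)
        simp only [DTree.eval_restr] at this
        have h3 : ex (fun x => pm (t.eval (Function.update x i b)) * h (Function.update x i b))
            - ex (fun x => pm (t.eval (Function.update x i b)) * h x) ≤ infl h i := by
          rw [← infl_eq h i b, ← ex_sub]
          apply ex_mono
          intro x
          rw [← mul_sub]
          refine (le_abs_self _).trans ?_
          rw [abs_mul, pm_abs, one_mul]
        linarith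
      have h1 := hs true t1 (by omega)
      have h0 := hs false t0 (by omega)
      rw [ex_split i, ex_split i (fun x => pm (DTree.eval _ x))]
      simp only [del_node, add_mul, Finset.sum_add_distrib, DTree.eval, Function.update_self,
        if_true, Bool.false_eq_true, if_false, ite_mul, one_mul, zero_mul, Finset.sum_ite_eq,
        Finset.mem_univ, div_mul_eq_mul_div, ← Finset.sum_div]
      linarith

theorem ex_pm {n : ℕ} (i : Fin n) : ex (fun x => pm (x i)) = 0 := by
  rw [ex_split i]; simp [ex_const, pm]

theorem os {n : ℕ} (l : ℝ) : ∀ (N : ℕ) (t : DTree n) (c : ℝ), t.sz ≤ N →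
    2 * l * ex (fun x => pm (t.eval x) * (c + ∑ j, pm (x j)))
      ≤ l ^ 2 * (c ^ 2 + ∑ j, del t j) + 1 := by
  have hleaf : ∀ (b : Bool) (c : ℝ),
    2 * l * ex (fun x : Fin n → Bool => pm ((DTree.leaf b : DTree n).eval x) * (c + ∑ j, pm (x j)))
      ≤ l ^ 2 * (c ^ 2 + ∑ j, del (DTree.leaf b : DTree n) j) + 1 := by
    intro b c
    simp only [DTree.eval, ex_mul, ex_add, ex_const, ex_sum, ex_pm, del, DTree.readsBit]
    cases b <;> simp [pm, ex_const]
    · nlinarith [sq_nonneg (l * c + 1)]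
    · nlinarith [sq_nonneg (l * c - 1)]
  intro N
  induction N with
  | zero =>
    intro t c ht
    cases t with
    | leaf b => exact hleaf b c
    | node => simp [DTree.sz] at ht
  | succ N ih =>
    intro t c ht
    cases t with
    | leaf b => exact hleaf b c
    | node i t0 t1 =>
      simp only [DTree.sz] at ht
      have hs : ∀ (b : Bool) (t : DTree n), t.sz ≤ N →
          2 * l * ex (fun x => pm (t.eval (Function.update x i b)) *
            (c + ∑ j, pm (Function.update x i b j)))
          ≤ l ^ 2 * ((c + pm b) ^ 2 + ∑ j, del (t.restr i b) j) + 1 := by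
        intro b t htN
        have := ih (t.restr i b) (c + pm b) ((DTree.sz_restr i b t).trans htN)
        simp only [DTree.eval_restr] at this
        have h0 : ex (fun x => pm (t.eval (Function.update x i b)) * pm (x i)) = 0 := by
          rw [ex_split i, ← ex_add]
          simp [pm, ex_const]
        have h3 : ex (fun x => pm (t.eval (Function.update x i b)) *
            (c + ∑ j, pm (Function.update x i b j)))
            = ex (fun x => pm (t.eval (Function.update x i b)) * (c + pm b + ∑ j, pm (x j))) := by
          rw [← sub_zero (ex (fun x => pm (t.eval (Function.update x i b)) *
            (c + pm b + ∑ j, pm (x j)))), ← h0, ← ex_sub]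
          congr 1
          funext x
          rw [← mul_sub]
          congr 1
          rw [← Finset.add_sum_erase _ _ (Finset.mem_univ i),
            ← Finset.add_sum_erase _ (fun j => pm (x j)) (Finset.mem_univ i)]
          have : ∑ j ∈ Finset.univ.erase i, pm (Function.update x i b j)
              = ∑ j ∈ Finset.univ.erase i, pm (x j) := by
            refine Finset.sum_congr rfl fun j hj => ?_
            rw [Function.update_of_ne (Finset.ne_of_mem_erase hj)]
          rw [this, Function.update_self]
          ring
        rw [h3]
        exact this
      have h1 := hs true t1 (by omega)
      have h0 := hs false t0 (by omega)
      rw [ex_split i]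
      simp only [del_node, Finset.sum_add_distrib, DTree.eval, Function.update_self,
        if_true, Bool.false_eq_true, if_false, Finset.sum_ite_eq,
        Finset.mem_univ, ← Finset.sum_div]
      simp only [pm, if_true, Bool.false_eq_true, if_false] at h1 h0 ⊢
      linarith

theorem infl_mono {n : ℕ} (f : (Fin n → Bool) → Bool) (hmono : monotoneBF f) (i : Fin n) :
    infl (fun x => pm (f x)) i = ex (fun x => pm (f x) * pm (x i)) := by
  rw [ex_split i, ← ex_add]
  unfold infl
  rw [div_eq_inv_mul, ← ex_mul]
  congr 1
  funext x
  have h := hmono (Function.update x i false) (Function.update x i true) (by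
    intro j
    by_cases hj : j = i
    · subst hj; simp
    · simp [hj])
  rw [abs_of_nonneg]
  · simp [pm]; ring
  · beta_reduce
    revert h
    cases f (Function.update x i false) <;> cases f (Function.update x i true) <;> simp [pm]

/-- If `f` is a monotone Boolean function on `n` bits and `A` is
a randomized decision-tree algorithm computing `f` exactly on every input, with
revealment `δ` (i.e. every bit is read with probability at most `δ`), then
`Var(f) ≤ δ^(3/2) · n^(1/2)`.  In particular a balanced monotone Boolean function
computed exactly requires `δ ≥ Ω(n^(-1/3))`. -/
theorem statement5 (n : ℕ) (f : (Fin n → Bool) → Bool) (A : RandAlg n)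
    (hmono : monotoneBF f) (hcomp : ∀ r x, (A.tree r).eval x = f x)
    (δ : ℝ) (hδ0 : 0 ≤ δ) (hδ : ∀ i, readProb A i ≤ δ) :
    pmVar f ≤ δ ^ ((3 : ℝ) / 2) * Real.sqrt n := by
  have hread : ∀ i, readProb A i = ∑ r, A.w r * del (A.tree r) i := by
    intro i
    unfold readProb del ex
    rw [Finset.sum_div]
    refine Finset.sum_congr rfl fun r _ => ?_
    rw [← mul_div_assoc, Finset.mul_sum]
    congr 1
    refine Finset.sum_congr rfl fun x _ => ?_
    split_ifs <;> simp
  set a : ℝ := ∑ j, infl (fun x => pm (f x)) j with ha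
  have hinf0 : ∀ j, 0 ≤ infl (fun x => pm (f x)) j := by
    intro j
    unfold infl ex
    positivity
  have ha0 : 0 ≤ a := Finset.sum_nonneg fun j _ => hinf0 j
  have haE : ex (fun x => pm (f x) * (0 + ∑ j, pm (x j))) = a := by
    rw [ha]
    simp only [infl_mono f hmono, zero_add, Finset.mul_sum]
    rw [ex_sum]
  -- variance bound
  have hvar : pmVar f ≤ δ * a := by
    have hr : ∀ r, pmVar f ≤ ∑ j, del (A.tree r) j * infl (fun x => pm (f x)) j := by
      intro r
      have := osss (fun x => pm (f x)) _ (A.tree r) le_rfl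
      simp only [hcomp] at this
      refine le_trans (le_of_eq ?_) this
      simp only [pmVar, ex, sq]
    calc pmVar f = ∑ r, A.w r * pmVar f := by rw [← Finset.sum_mul, A.w_sum, one_mul]
      _ ≤ ∑ r, A.w r * ∑ j, del (A.tree r) j * infl (fun x => pm (f x)) j :=
        Finset.sum_le_sum fun r _ => mul_le_mul_of_nonneg_left (hr r) (A.w_nonneg r)
      _ = ∑ j, readProb A j * infl (fun x => pm (f x)) j := by
        simp only [hread, Finset.mul_sum, Finset.sum_mul]
        rw [Finset.sum_comm]
        simp only [mul_assoc]
      _ ≤ ∑ j, δ * infl (fun x => pm (f x)) j :=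
        Finset.sum_le_sum fun j _ => mul_le_mul_of_nonneg_right (hδ j) (hinf0 j)
      _ = δ * a := by rw [ha, Finset.mul_sum]
  have hsq : a ^ 2 ≤ δ * n := by
    have hr : ∀ r, a ^ 2 ≤ ∑ j, del (A.tree r) j := by
      intro r
      have hq : ∀ l : ℝ, 0 ≤ (∑ j, del (A.tree r) j) * (l * l) + (-2 * a) * l + 1 := by
        intro l
        have := os l _ (A.tree r) 0 le_rfl
        simp only [hcomp] at this
        rw [haE] at this
        linarith
      have := discrim_le_zero hq
      unfold discrim at this
      linarith
    calc a ^ 2 = ∑ r, A.w r * a ^ 2 := by rw [← Finset.sum_mul, A.w_sum, one_mul]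
      _ ≤ ∑ r, A.w r * ∑ j, del (A.tree r) j :=
        Finset.sum_le_sum fun r _ => mul_le_mul_of_nonneg_left (hr r) (A.w_nonneg r)
      _ = ∑ j, readProb A j := by
        simp only [hread, Finset.mul_sum]
        rw [Finset.sum_comm]
      _ ≤ ∑ _j : Fin n, δ := Finset.sum_le_sum fun j _ => hδ j
      _ = δ * n := by simp [mul_comm]
  have hal : a ≤ Real.sqrt (δ * n) := Real.le_sqrt_of_sq_le hsq
  have hpow : δ ^ ((3 : ℝ) / 2) = δ * Real.sqrt δ := by
    rw [Real.sqrt_eq_rpow, show (3 : ℝ) / 2 = 1 + 1 / 2 by norm_num,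
      Real.rpow_add_of_nonneg hδ0 (by norm_num) (by norm_num), Real.rpow_one]
  calc pmVar f ≤ δ * a := hvar
    _ ≤ δ * Real.sqrt (δ * n) := mul_le_mul_of_nonneg_left hal hδ0
    _ = _ := by rw [hpow, Real.sqrt_mul hδ0, mul_assoc]
end

section
/- Let H = 2^d and W > d. In the nonmonotone ensemble on the wrapped extended butterfly Ω_{H,W}, let f be the Boolean function of the H·W input bits defined as follows: among the vertices of time slice 0 that lie on a directed cycle of the random out-degree-one subgraph, take the lexicographically smallest one and output its input bit. Then f is exactly balanced: Pr[f = 1] = 1/2 for uniform input bits. -/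
/-- The step map of the random out-degree-one subgraph of the wrapped extended
butterfly `Ω_{H,W}` in the nonmonotone ensemble: the vertex `(h, t)` moves to
`(2h + β(h,t), t + 1)`, where the input bit `β(h,t)` selects which of the two
outgoing edges is kept (it is the parity of the first coordinate of the
destination). -/
def bstep (H W : ℕ) (β : ZMod H × ZMod W → Bool) (v : ZMod H × ZMod W) :
    ZMod H × ZMod W :=
  (2 * v.1 + (if β v then 1 else 0), v.2 + 1)

/-- A point lies on a directed cycle of the functional graph of `g` iff it is
periodic. -/
def onCycle {α : Type*} (g : α → α) (v : α) : Prop := ∃ k, 0 < k ∧ g^[k] v = v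

/-- The Boolean function of the nonmonotone ensemble: among the vertices of time
slice 0 lying on a directed cycle of the out-degree-one random subgraph, take the
lexicographically smallest one (the one with smallest height) and output its
input bit.  (A cycle always crosses every time slice, so the infimum below is
attained; the junk value for the empty set is never used.) -/
noncomputable def lexCycleBit (H W : ℕ) (β : ZMod H × ZMod W → Bool) : Bool :=
  β (((sInf {k : ℕ | onCycle (bstep H W β) ((k : ZMod H), (0 : ZMod W))} : ℕ) :
      ZMod H), (0 : ZMod W))

def xph (d : ℕ) (x : ℕ) (h : ZMod (2 ^ d)) : ZMod (2 ^ d) := ((h.val ^^^ x : ℕ) : ZMod (2 ^ d))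

theorem xph_cast (d x n : ℕ) : xph d x (n : ZMod (2 ^ d)) = ((n ^^^ x : ℕ) : ZMod (2 ^ d)) := by
  unfold xph
  rw [ZMod.natCast_eq_natCast_iff', ZMod.val_natCast, Nat.xor_mod_two_pow, Nat.xor_mod_two_pow,
    Nat.mod_mod]

theorem xph_zero (d : ℕ) (h : ZMod (2 ^ d)) : xph d 0 h = h := by
  unfold xph; simp

theorem xph_invol (d x : ℕ) (h : ZMod (2 ^ d)) : xph d x (xph d x h) = h := by
  obtain ⟨n, rfl⟩ := ZMod.natCast_zmod_surjective h
  rw [xph_cast, xph_cast, Nat.xor_assoc, Nat.xor_self, Nat.xor_zero]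

theorem xph_big (d x : ℕ) (hx : 2 ^ d ∣ x) (h : ZMod (2 ^ d)) : xph d x h = h := by
  obtain ⟨n, rfl⟩ := ZMod.natCast_zmod_surjective h
  rw [xph_cast, ZMod.natCast_eq_natCast_iff', Nat.xor_mod_two_pow, Nat.mod_eq_zero_of_dvd hx,
    Nat.xor_zero]

theorem xor_two_mul (n x : ℕ) (b : Bool) :
    2 * (n ^^^ x) + (if b then 1 else 0) = (2 * n + (if b then 1 else 0)) ^^^ (2 * x) := by
  have h := Nat.xor_bit b n false x
  simp only [Nat.bit_val] at h
  cases b <;> simp_all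

theorem xor_flip (n : ℕ) (b : Bool) :
    2 * n + (if (!b) then 1 else 0) = (2 * n + (if b then 1 else 0)) ^^^ 1 := by
  have h := Nat.xor_bit b n true 0
  simp only [Nat.bit_val] at h
  cases b <;> simp_all

theorem xph_step (d x : ℕ) (b : Bool) (h : ZMod (2 ^ d)) :
    2 * xph d x h + (if b then 1 else 0) = xph d (2 * x) (2 * h + (if b then 1 else 0)) := by
  obtain ⟨n, rfl⟩ := ZMod.natCast_zmod_surjective h
  have := congrArg (Nat.cast : ℕ → ZMod (2 ^ d)) (xor_two_mul n x b)
  rw [← xph_cast] at this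
  rw [xph_cast]
  simpa using this

theorem xph_flip (d : ℕ) (b : Bool) (h : ZMod (2 ^ d)) :
    2 * h + (if (!b) then 1 else 0) = xph d 1 (2 * h + (if b then 1 else 0)) := by
  obtain ⟨n, rfl⟩ := ZMod.natCast_zmod_surjective h
  have := congrArg (Nat.cast : ℕ → ZMod (2 ^ d)) (xor_flip n b)
  rw [← xph_cast] at this
  simpa using this

def vphi (d W : ℕ) (v : ZMod (2 ^ d) × ZMod W) : ZMod (2 ^ d) × ZMod W :=
  (xph d (2 ^ v.2.val / 2) v.1, v.2)

theorem vphi_invol (d W : ℕ) (v : ZMod (2 ^ d) × ZMod W) : vphi d W (vphi d W v) = v := by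
  simp [vphi, xph_invol]

theorem vphi_slice (d W : ℕ) (h : ZMod (2 ^ d)) : vphi d W (h, 0) = (h, 0) := by
  simp [vphi, xph_zero]

def bitTwist (d W : ℕ) (β : ZMod (2 ^ d) × ZMod W → Bool) (v : ZMod (2 ^ d) × ZMod W) : Bool :=
  if v.2 = 0 then !(β (vphi d W v)) else β (vphi d W v)

theorem bitTwist_invol (d W : ℕ) (β : ZMod (2 ^ d) × ZMod W → Bool) : bitTwist d W (bitTwist d W β) = β := by
  funext v
  have h2 : (vphi d W v).2 = v.2 := rfl
  unfold bitTwist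
  rw [vphi_invol, h2]
  split_ifs <;> simp

theorem vphi_semi (d W : ℕ) (hW : d < W) (β : ZMod (2 ^ d) × ZMod W → Bool) :
    Function.Semiconj (vphi d W) (bstep (2 ^ d) W β) (bstep (2 ^ d) W (bitTwist d W β)) := by
  rintro ⟨h, t⟩
  have : NeZero W := ⟨by omega⟩
  have h2 : (vphi d W (h, t)).2 = t := rfl
  have h1 : (vphi d W (h, t)).1 = xph d (2 ^ t.val / 2) h := rfl
  unfold bstep
  rw [h1, h2]
  unfold bitTwist
  rw [vphi_invol, h2]
  refine Prod.ext ?_ rfl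
  simp only [vphi]
  by_cases hd : d = 0
  · subst hd
    have : Subsingleton (ZMod (2 ^ 0)) := inferInstanceAs (Subsingleton (Fin 1))
    exact Subsingleton.elim _ _
  by_cases ht : t = 0
  · subst ht
    have h3 : ((0 : ZMod W) + 1).val = 1 := by
      have : Fact (1 < W) := ⟨by omega⟩
      rw [zero_add, ZMod.val_one]
    rw [h3, if_pos rfl, xph_flip]
    simp [xph_zero]
  · rw [if_neg ht, xph_step]
    have ht0 : t.val ≠ 0 := by rwa [Ne, ZMod.val_eq_zero]
    obtain ⟨s, hs⟩ := Nat.exists_eq_succ_of_ne_zero ht0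
    have e : 2 * (2 ^ t.val / 2) = 2 ^ t.val := by
      rw [hs, pow_succ]; omega
    rw [e]
    have hlt := ZMod.val_lt t
    by_cases hw : t.val + 1 < W
    · have : Fact (1 < W) := ⟨by omega⟩
      rw [ZMod.val_add_of_lt (by rw [ZMod.val_one]; exact hw), ZMod.val_one, pow_succ,
        Nat.mul_div_cancel _ (by norm_num)]
    · have h4 : t + 1 = 0 := by
        have : ((t.val + 1 : ℕ) : ZMod W) = 0 := by
          rw [show t.val + 1 = W by omega]; simp
        simpa using this
      rw [h4, ZMod.val_zero, xph_big d (2 ^ t.val) (pow_dvd_pow 2 (by omega))]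
      simp [xph_zero]

theorem onCycle_slice (d W : ℕ) (hW : d < W) (β : ZMod (2 ^ d) × ZMod W → Bool)
    (h : ZMod (2 ^ d)) (hc : onCycle (bstep (2 ^ d) W β) (h, 0)) :
    onCycle (bstep (2 ^ d) W (bitTwist d W β)) (h, 0) := by
  obtain ⟨k, hk, e⟩ := hc
  refine ⟨k, hk, ?_⟩
  have := (vphi_semi d W hW β).iterate_right k (h, 0)
  rw [e, vphi_slice] at this
  exact this.symm

theorem lex_flip (d W : ℕ) (hW : d < W) (β : ZMod (2 ^ d) × ZMod W → Bool) :
    lexCycleBit (2 ^ d) W (bitTwist d W β) = !(lexCycleBit (2 ^ d) W β) := by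
  have hs : {k : ℕ | onCycle (bstep (2 ^ d) W (bitTwist d W β)) ((k : ZMod (2 ^ d)), (0 : ZMod W))}
      = {k : ℕ | onCycle (bstep (2 ^ d) W β) ((k : ZMod (2 ^ d)), (0 : ZMod W))} := by
    ext k
    constructor
    · intro h
      have := onCycle_slice d W hW _ _ h
      rwa [bitTwist_invol] at this
    · intro h
      exact onCycle_slice d W hW _ _ h
  unfold lexCycleBit
  rw [hs]
  simp [bitTwist, vphi_slice]

theorem statement7 (d H W : ℕ) (hH : H = 2 ^ d) (hW : d < W) :
    2 * Nat.card {β : ZMod H × ZMod W → Bool // lexCycleBit H W β = true}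
      = 2 ^ (H * W) := by
  subst hH
  have : NeZero W := ⟨by omega⟩
  have e : {β : ZMod (2 ^ d) × ZMod W → Bool // lexCycleBit (2 ^ d) W β = true} ≃
      {β : ZMod (2 ^ d) × ZMod W → Bool // ¬ lexCycleBit (2 ^ d) W β = true} :=
    Equiv.subtypeEquiv ⟨bitTwist d W, bitTwist d W, bitTwist_invol d W, bitTwist_invol d W⟩ (by
      intro β
      simp [lex_flip d W hW])
  classical
  have h1 := Nat.card_congr (Equiv.sumCompl
    (fun β : ZMod (2 ^ d) × ZMod W → Bool => lexCycleBit (2 ^ d) W β = true))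
  rw [Nat.card_sum, ← Nat.card_congr e] at h1
  rw [two_mul, h1, Nat.card_fun, Nat.card_prod]
  simp
end

section
/- In the nonmonotone ensemble on the wrapped extended butterfly Ω_{H,W} (H = 2^d, W > d), consider the Las Vegas exploration: pick a uniformly random time slice t₀ and, starting from every vertex of slice t₀, follow the unique outgoing edges of the random subgraph forward in time for W steps (paths coalesce when they meet), reading the input bit at every visited vertex. There is a universal constant C such that, for every fixed input bit, the probability that this procedure reads that bit is at most C·(W^{-1}·log H + H^{-1}). -/
section work
open Finset BigOperators

theorem avg_resample {α γ B : Type*} [Fintype α] [Fintype γ] [Fintype B] [Nonempty B]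
    [DecidableEq α] [DecidableEq γ]
    (e : α → γ) (he : Function.Injective e) (Φ : (γ → B) → ℝ) :
    (𝔼 x : γ → B, 𝔼 y : α → B, Φ (Function.extend e y x)) = 𝔼 x : γ → B, Φ x := by
  classical
  have h1 : (𝔼 x : γ → B, 𝔼 y : α → B, Φ (Function.extend e y x))
      = 𝔼 p : (γ → B) × (α → B), Φ (Function.extend e p.2 p.1) := by
    rw [← Finset.univ_product_univ, Finset.expect_product]
  have h2 : (𝔼 x : γ → B, Φ x) = 𝔼 p : (γ → B) × (α → B), Φ p.1 := by
    rw [← Finset.univ_product_univ, Finset.expect_product]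
    simp
  rw [h1, h2]
  have key : Function.Involutive (fun p : (γ → B) × (α → B) =>
      ((Function.extend e p.2 p.1, p.1 ∘ e) : (γ → B) × (α → B))) := by
    rintro ⟨x, y⟩
    ext c
    · by_cases hc : ∃ a, e a = c
      · obtain ⟨a, rfl⟩ := hc
        simp [he.extend_apply]
      · simp [Function.extend_apply' _ _ _ hc]
    · simp [he.extend_apply]
  exact Fintype.expect_equiv key.toPerm _ _ (fun p => rfl)

theorem avg_comp_inj {α γ B : Type*} [Fintype α] [Fintype γ] [Fintype B] [Nonempty B]
    [DecidableEq α] [DecidableEq γ]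
    (e : α → γ) (he : Function.Injective e) (Ψ : (α → B) → ℝ) :
    (𝔼 x : γ → B, Ψ (x ∘ e)) = 𝔼 y : α → B, Ψ y := by
  rw [← avg_resample e he]
  have : ∀ (x : γ → B) (y : α → B), Function.extend e y x ∘ e = y := by
    intro x y; ext a; simp [he.extend_apply]
  simp [this]

theorem avg_det {γ : Type*} [Fintype γ] [DecidableEq γ] (Q : Finset γ)
    (φ : (γ → Bool) → γ → Bool)
    (hφ : ∀ x x' : γ → Bool, (∀ a, a ∉ Q → x a = x' a) → φ x = φ x') :
    (𝔼 x : γ → Bool, if ∀ a ∈ Q, x a = φ x a then (1:ℝ) else 0) = 1 / 2 ^ (#Q) := by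
  classical
  have he : Function.Injective (Subtype.val : Q → γ) := Subtype.val_injective
  rw [← avg_resample (Subtype.val : Q → γ) he]
  have : ∀ (x : γ → Bool),
      (𝔼 y : Q → Bool, if ∀ a ∈ Q, Function.extend Subtype.val y x a
        = φ (Function.extend Subtype.val y x) a then (1:ℝ) else 0) = 1 / 2 ^ (#Q) := by
    intro x
    have h : ∀ y : Q → Bool, (∀ a ∈ Q, Function.extend Subtype.val y x a
        = φ (Function.extend Subtype.val y x) a) ↔ y = fun a : Q => φ x a := by
      intro y
      have h3 : φ (Function.extend Subtype.val y x) = φ x := by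
        apply hφ
        intro a ha
        apply Function.extend_apply'
        rintro ⟨b, rfl⟩
        exact ha b.2
      rw [h3]
      constructor
      · intro h; ext a; rw [← h a a.2, he.extend_apply]
      · rintro rfl a ha
        exact he.extend_apply _ _ (⟨a, ha⟩ : Q)
    simp only [h]
    rw [Fintype.expect_eq_sum_div_card]
    simp
  simp [this]

/-- one step of the set valued chain -/
def stepSet {H : ℕ} (β : ZMod H → Bool) (S : Finset (ZMod H)) : Finset (ZMod H) :=
  S.image (fun h => 2 * h + if β h then 1 else 0)

noncomputable def opA (H : ℕ) [NeZero H] :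
    (Finset (ZMod H) → ℝ) →ₗ[ℝ] (Finset (ZMod H) → ℝ) where
  toFun g S := 𝔼 β : ZMod H → Bool, g (stepSet β S)
  map_add' g g' := by ext S; simp [Finset.expect_add_distrib]
  map_smul' c g := by ext S; simp [Finset.mul_expect]

theorem opA_apply (H : ℕ) [NeZero H] (g : Finset (ZMod H) → ℝ) (S) :
    opA H g S = 𝔼 β : ZMod H → Bool, g (stepSet β S) := rfl

theorem opA_mono (H : ℕ) [NeZero H] (g g' : Finset (ZMod H) → ℝ) (h : g ≤ g') :
    opA H g ≤ opA H g' := by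
  intro S
  simp only [opA_apply]
  exact Finset.expect_le_expect (fun β _ => h _)

theorem opA_pow_mono (H : ℕ) [NeZero H] (t : ℕ) (g g' : Finset (ZMod H) → ℝ) (h : g ≤ g') :
    (opA H ^ t) g ≤ (opA H ^ t) g' := by
  induction t generalizing g g' with
  | zero => simpa using h
  | succ t ih =>
    rw [pow_succ]
    exact ih _ _ (opA_mono H _ _ h)

theorem opA_pow_const (H : ℕ) [NeZero H] (t : ℕ) (c : ℝ) :
    (opA H ^ t) (fun _ => c) = fun _ => c := by
  induction t with
  | zero => rfl
  | succ t ih =>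
    rw [pow_succ, Module.End.mul_apply]
    have : opA H (fun _ => c) = fun _ => c := by
      ext S; simp [opA_apply]
    rw [this, ih]

/-- membership probability -/
noncomputable def hitP (H : ℕ) [NeZero H] (t : ℕ) (v : ZMod H) : ℝ :=
  (opA H ^ t) (fun S => if v ∈ S then 1 else 0) Finset.univ

def sig {H : ℕ} (c : ℕ) (h : ZMod H) : ZMod H := ((h.val ^^^ c : ℕ) : ZMod H)

theorem sig_cast {d : ℕ} (c x : ℕ) : sig c (x : ZMod (2^d)) = ((x ^^^ c : ℕ) : ZMod (2^d)) := by
  unfold sig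
  rw [ZMod.natCast_eq_natCast_iff, ZMod.val_natCast]
  unfold Nat.ModEq
  rw [Nat.xor_mod_two_pow, Nat.xor_mod_two_pow, Nat.mod_mod]

theorem sig_sig {d : ℕ} (c : ℕ) (h : ZMod (2^d)) : sig c (sig c h) = h := by
  conv_lhs => rw [show sig c h = ((h.val ^^^ c : ℕ) : ZMod (2^d)) from rfl]
  rw [sig_cast, Nat.xor_assoc, Nat.xor_self, Nat.xor_zero, ZMod.natCast_zmod_val]

theorem sig_step {d : ℕ} (c : ℕ) (h : ZMod (2^d)) (b : Bool) :
    2 * sig (c / 2) h + (if (xor b (c.testBit 0)) then 1 else 0)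
      = sig c (2 * h + if b then 1 else 0) := by
  have h1 : (2 * h + if b then 1 else 0) = ((2 * h.val + b.toNat : ℕ) : ZMod (2^d)) := by
    cases b <;> simp
  rw [h1, sig_cast]
  unfold sig
  have h2 : ((2 * h.val + b.toNat) ^^^ c) = 2 * (h.val ^^^ (c/2)) + (xor b (c.testBit 0)).toNat := by
    apply Nat.eq_of_testBit_eq
    intro i
    have e2 : ∀ (n : ℕ) (b : Bool), 2 * n + b.toNat = Nat.bit b n := by
      intro n b; cases b <;> simp [Nat.bit]
    rw [e2, e2, Nat.testBit_xor]
    cases i with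
    | zero =>
      rcases Nat.mod_two_eq_zero_or_one c with h | h <;> cases b <;> simp [h]
    | succ i => simp [Nat.testBit_xor, Nat.testBit_succ]
  rw [h2]
  generalize xor b (c.testBit 0) = b'
  cases b' <;> simp

theorem opA_sig {d : ℕ} (c : ℕ) (g : Finset (ZMod (2^d)) → ℝ) :
    opA (2^d) (fun S => g (S.image (sig c))) = fun S => opA (2^d) g (S.image (sig (c/2))) := by
  ext S
  simp only [opA_apply]
  let f : (ZMod (2^d) → Bool) → (ZMod (2^d) → Bool) :=
    fun β h => xor (β (sig (c/2) h)) (c.testBit 0)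
  have hf : Function.Involutive f := by
    intro β; ext h; simp [f, sig_sig]
  refine Fintype.expect_equiv hf.toPerm _ _ (fun β => ?_)
  show _ = g (stepSet (f β) _)
  congr 1
  unfold stepSet
  rw [Finset.image_image, Finset.image_image]
  congr 1
  ext h : 1
  simp only [Function.comp, f, sig_sig]
  rw [sig_step]

theorem opA_pow_sig {d : ℕ} (t c : ℕ) (g : Finset (ZMod (2^d)) → ℝ) :
    (opA (2^d) ^ t) (fun S => g (S.image (sig c)))
      = fun S => (opA (2^d) ^ t) g (S.image (sig (c/2^t))) := by
  induction t generalizing c g with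
  | zero => simp
  | succ t ih =>
    rw [pow_succ, Module.End.mul_apply, opA_sig, ih, Nat.div_div_eq_div_mul, pow_succ' 2 t]
    rfl

theorem hitP_const {d : ℕ} (t : ℕ) (v : ZMod (2^d)) : hitP (2^d) t v = hitP (2^d) t 0 := by
  unfold hitP
  have := congrFun (opA_pow_sig (d := d) t v.val (fun S => if v ∈ S then 1 else 0)) Finset.univ
  have hu : (Finset.univ : Finset (ZMod (2^d))).image (sig (v.val / 2^t)) = Finset.univ := by
    apply Finset.image_univ_of_surjective
    intro y; exact ⟨_, sig_sig _ y⟩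
  simp only [hu] at this
  rw [← this]
  refine congrFun (congrArg _ (funext fun S => ?_)) _
  congr 1
  simp only [Finset.mem_image, eq_iff_iff]
  have h0 : sig v.val (0 : ZMod (2^d)) = v := by
    unfold sig; simp
  constructor
  · rintro ⟨a, ha, hav⟩
    have := congrArg (sig v.val) (hav.trans h0.symm)
    rw [sig_sig, sig_sig] at this
    rwa [← this]
  · intro h; exact ⟨0, h, h0⟩

theorem card_eq_hitP {d : ℕ} (t : ℕ) :
    (opA (2^d) ^ t) (fun S => (#S : ℝ)) Finset.univ = 2^d * hitP (2^d) t 0 := by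
  have : (fun S : Finset (ZMod (2^d)) => (#S : ℝ))
      = ∑ v : ZMod (2^d), fun S => if v ∈ S then (1:ℝ) else 0 := by
    ext S; simp
  rw [this, map_sum, Finset.sum_apply]
  have : ∀ v, (opA (2^d) ^ t) (fun S => if v ∈ S then (1:ℝ) else 0) Finset.univ
    = hitP (2^d) t 0 := fun v => hitP_const t v
  simp [this, ZMod.card]

section streams
variable {d m T : ℕ}

def sbit (x : Fin m × Fin T → Bool) (i : Fin m) (t : ℕ) : Bool :=
  if h : t < T then x (i, ⟨t, h⟩) else false

def spos (q0 : Fin m → ZMod (2^d)) (x : Fin m × Fin T → Bool) : ℕ → Fin m → ZMod (2^d)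
  | 0 => q0
  | t + 1 => fun i => 2 * spos q0 x t i + if sbit x i t then 1 else 0

def salive (q0 : Fin m → ZMod (2^d)) (x : Fin m × Fin T → Bool) : ℕ → Finset (Fin m)
  | 0 => Finset.univ
  | t + 1 => (salive q0 x t).filter
      (fun i => ∀ k ∈ salive q0 x t, k < i → spos q0 x (t+1) k ≠ spos q0 x (t+1) i)

theorem salive_inj (q0 : Fin m → ZMod (2^d)) (hq : Function.Injective q0)
    (x : Fin m × Fin T → Bool) (t : ℕ) :
    Set.InjOn (spos q0 x t) (salive q0 x t) := by
  cases t with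
  | zero => exact hq.injOn
  | succ t =>
    intro i hi j hj hij
    simp only [salive, Finset.coe_filter, Set.mem_ofPred_eq] at hi hj
    rcases lt_trichotomy i j with h | h | h
    · exact absurd hij (hj.2 i hi.1 h)
    · exact h
    · exact absurd hij.symm (hi.2 j hj.1 h)

theorem salive_anti (q0 : Fin m → ZMod (2^d)) (x : Fin m × Fin T → Bool) {t t' : ℕ}
    (h : t ≤ t') : salive q0 x t' ⊆ salive q0 x t := by
  induction h with
  | refl => exact Finset.Subset.refl _
  | step _ ih => exact (Finset.filter_subset _ _).trans ih

theorem salive_image (q0 : Fin m → ZMod (2^d)) (x : Fin m × Fin T → Bool) (t : ℕ) :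
    (salive q0 x (t+1)).image (spos q0 x (t+1)) = (salive q0 x t).image (spos q0 x (t+1)) := by
  apply Finset.Subset.antisymm
  · exact Finset.image_subset_image (Finset.filter_subset _ _)
  · intro y hy
    obtain ⟨i, hi, rfl⟩ := Finset.mem_image.1 hy
    let V := (salive q0 x t).filter (fun k => spos q0 x (t+1) k = spos q0 x (t+1) i)
    have hV : V.Nonempty := ⟨i, by simp [V, hi]⟩
    have hmem := V.min'_mem hV
    have h1 := (Finset.mem_filter.1 hmem)
    refine Finset.mem_image.2 ⟨V.min' hV, ?_, h1.2⟩
    refine Finset.mem_filter.2 ⟨h1.1, fun k hk hlt heq => ?_⟩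
    have : k ∈ V := Finset.mem_filter.2 ⟨hk, heq.trans h1.2⟩
    exact absurd (V.min'_le k this) (not_le.2 hlt)

theorem sbit_congr (x x' : Fin m × Fin T → Bool) (t : ℕ)
    (h : ∀ i : Fin m, ∀ s : Fin T, (s : ℕ) < t → x (i, s) = x' (i, s)) :
    ∀ s < t, ∀ i, sbit x i s = sbit x' i s := by
  intro s hs i
  unfold sbit
  split_ifs with hT
  · exact h i ⟨s, hT⟩ hs
  · rfl

theorem spos_congr (q0 : Fin m → ZMod (2^d)) (x x' : Fin m × Fin T → Bool) (t : ℕ)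
    (h : ∀ s < t, ∀ i, sbit x i s = sbit x' i s) :
    spos q0 x t = spos q0 x' t ∧ salive q0 x t = salive q0 x' t := by
  induction t with
  | zero => exact ⟨rfl, rfl⟩
  | succ t ih =>
    obtain ⟨h1, h2⟩ := ih (fun s hs => h s (by omega))
    have h3 : spos q0 x (t+1) = spos q0 x' (t+1) := by
      ext i; simp only [spos, h1, h t (by omega)]
    refine ⟨h3, ?_⟩
    simp only [salive, h3, h2]

theorem avg_fresh (U : Finset (Fin m)) (p : Fin m → ZMod (2^d)) (hp : Set.InjOn p U)
    (g : Finset (ZMod (2^d)) → ℝ) :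
    (𝔼 y : Fin m → Bool, g (U.image (fun i => 2 * p i + if y i then 1 else 0)))
      = opA (2^d) g (U.image p) := by
  rw [opA_apply]
  let Ψ : (U → Bool) → ℝ := fun z =>
    g (Finset.univ.image (fun u : U => 2 * p u + if z u then 1 else 0))
  have h1 := avg_comp_inj (Subtype.val : U → Fin m) Subtype.val_injective Ψ
  have h2 := avg_comp_inj (fun u : U => p u)
    (fun a b hab => Subtype.ext (hp a.2 b.2 hab)) Ψ
  calc _ = 𝔼 y : Fin m → Bool, Ψ (y ∘ Subtype.val) := by
        refine Finset.expect_congr rfl fun y _ => ?_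
        simp only [Ψ]
        congr 1
        ext z
        simp only [Finset.mem_image, Finset.mem_univ, true_and, Function.comp]
        constructor
        · rintro ⟨a, ha, h⟩; exact ⟨⟨a, ha⟩, h⟩
        · rintro ⟨a, h⟩; exact ⟨a, a.2, h⟩
    _ = _ := h1
    _ = _ := h2.symm
    _ = _ := by
        refine Finset.expect_congr rfl fun y _ => ?_
        simp only [Ψ, stepSet]
        congr 1
        ext z
        simp only [Finset.mem_image, Finset.mem_univ, true_and, Function.comp]
        constructor
        · rintro ⟨a, h⟩; exact ⟨p a, ⟨a, a.2, rfl⟩, h⟩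
        · rintro ⟨_, ⟨a, ha, rfl⟩, h⟩; exact ⟨⟨a, ha⟩, h⟩

theorem stream_law (q0 : Fin m → ZMod (2^d)) (hq : Function.Injective q0) (t : ℕ) (ht : t ≤ T)
    (g : Finset (ZMod (2^d)) → ℝ) :
    (𝔼 x : Fin m × Fin T → Bool, g ((salive q0 x t).image (spos q0 x t)))
      = (opA (2^d) ^ t) g (Finset.univ.image q0) := by
  induction t generalizing g with
  | zero => simp [salive, spos]
  | succ t ih =>
    rw [pow_succ, Module.End.mul_apply, ← ih (by omega)]
    simp only [salive_image]
    let e : Fin m → Fin m × Fin T := fun i => (i, ⟨t, by omega⟩)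
    have he : Function.Injective e := fun a b h => congrArg Prod.fst h
    rw [← avg_resample e he]
    refine Finset.expect_congr rfl fun x _ => ?_
    rw [← avg_fresh _ _ (salive_inj q0 hq x t)]
    refine Finset.expect_congr rfl fun y _ => ?_
    have hb : ∀ i : Fin m, ∀ s : Fin T, (s : ℕ) < t → Function.extend e y x (i, s) = x (i, s) := by
      intro i s hs
      apply Function.extend_apply'
      rintro ⟨a, ha⟩
      have := congrArg (fun z => (z.2 : ℕ)) ha
      simp [e] at this
      omega
    obtain ⟨h1, h2⟩ := spos_congr q0 _ _ t (sbit_congr _ _ t hb)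
    have h3 : ∀ i, sbit (Function.extend e y x) i t = y i := by
      intro i
      unfold sbit
      rw [dif_pos (by omega)]
      exact he.extend_apply y x i
    simp only [spos, h1, h2, h3]

def sev (d : ℕ) (x : Fin m × Fin T → Bool) (i j : Fin m) (s : ℕ) : Prop :=
  sbit x i s ≠ sbit x j s ∧ ∀ r < d, sbit x i (s+1+r) = sbit x j (s+1+r)

instance (x : Fin m × Fin T → Bool) (i j : Fin m) (s : ℕ) : Decidable (sev d x i j s) := by
  unfold sev; infer_instance

theorem sev_symm {x : Fin m × Fin T → Bool} {i j : Fin m} {s : ℕ} :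
    sev d x i j s ↔ sev d x j i s := by
  unfold sev
  simp only [ne_comm, eq_comm]

theorem sev_merge (q0 : Fin m → ZMod (2^d)) (x : Fin m × Fin T → Bool) (i j : Fin m) (s : ℕ)
    (h : sev d x i j s) : spos q0 x (s+1+d) i = spos q0 x (s+1+d) j := by
  have key : ∀ r ≤ d, spos q0 x (s+1+r) i - spos q0 x (s+1+r) j
      = 2^r * (spos q0 x (s+1) i - spos q0 x (s+1) j) := by
    intro r hr
    induction r with
    | zero => simp
    | succ r ih =>
      have h1 := ih (by omega)
      rw [← add_assoc]
      simp only [spos] at h1 ⊢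
      rw [h.2 r (by omega)]
      rw [pow_succ]
      linear_combination 2 * h1
  have := key d le_rfl
  have h0 : (2 : ZMod (2^d))^d = 0 := by
    have := ZMod.natCast_self (2^d)
    rw [Nat.cast_pow] at this
    exact_mod_cast this
  rw [h0, zero_mul, sub_eq_zero] at this
  exact this

theorem sev_lost (q0 : Fin m → ZMod (2^d)) (hq : Function.Injective q0)
    (x : Fin m × Fin T → Bool) (i j : Fin m) (hij : i ≠ j) (s : ℕ) (hs : s + 1 + d ≤ T)
    (h : sev d x i j s) (hi : i ∈ salive q0 x T) (hj : j ∈ salive q0 x T) : False :=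
  hij (salive_inj q0 hq x (s+1+d) (salive_anti q0 x hs hi) (salive_anti q0 x hs hj)
    (sev_merge q0 x i j s h))

/-- the coordinates of a run -/
def runQ (d : ℕ) (j : Fin m) (s : ℕ) : Finset (Fin m × Fin T) :=
  Finset.univ.filter (fun a => a.1 = j ∧ s ≤ a.2 ∧ (a.2 : ℕ) ≤ s + d)

theorem card_runQ (j : Fin m) (s : ℕ) (hs : s + 1 + d ≤ T) :
    #(runQ (T := T) d j s) = d + 1 := by
  have : runQ (T := T) d j s = {j} ×ˢ Finset.Icc ⟨s, by omega⟩ ⟨s + d, by omega⟩ := by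
    ext ⟨a, b⟩
    simp [runQ, Fin.le_def]
    tauto
  rw [this, Finset.card_product]
  simp
  omega

theorem sev_iff (x : Fin m × Fin T → Bool) (i j : Fin m) (s : ℕ) (hs : s + 1 + d ≤ T) :
    sev d x i j s ↔ ∀ a ∈ runQ (T := T) d j s,
      x a = if (a.2 : ℕ) = s then !(x (i, a.2)) else x (i, a.2) := by
  constructor
  · rintro ⟨h1, h2⟩ ⟨a, b, hb⟩ ha
    simp only [runQ, Finset.mem_filter, Finset.mem_univ, true_and] at ha
    obtain ⟨rfl, h3, h4⟩ := ha
    split_ifs with hc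
    · simp only at hc
      subst hc
      simp only [sbit, hb, dif_pos] at h1
      revert h1
      cases x (a, ⟨b, hb⟩) <;> cases x (i, ⟨b, hb⟩) <;> simp
    · simp only at hc h3 h4
      have := h2 (b - (s+1)) (by omega)
      rw [show s + 1 + (b - (s+1)) = b by omega] at this
      simp only [sbit, hb, dif_pos] at this
      exact this.symm
  · intro h
    refine ⟨?_, fun r hr => ?_⟩
    · have := h (j, ⟨s, by omega⟩) (by simp [runQ])
      simp only [if_true] at this
      simp only [sbit, show s < T by omega, dif_pos]
      rw [this]
      cases x (i, ⟨s, by omega⟩) <;> simp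
    · have := h (j, ⟨s + 1 + r, by omega⟩) (by simp [runQ]; omega)
      rw [if_neg (by simp; omega)] at this
      simp only [sbit, show s + 1 + r < T by omega, dif_pos]
      exact this.symm

theorem prob_sev (i j : Fin m) (hij : i ≠ j) (s : ℕ) (hs : s + 1 + d ≤ T) :
    (𝔼 x : Fin m × Fin T → Bool, if sev d x i j s then (1:ℝ) else 0) = 1 / 2^(d+1) := by
  simp only [sev_iff _ i j s hs]
  rw [← card_runQ (d := d) (T := T) j s hs]
  refine avg_det (runQ (T := T) d j s)
    (fun x a => if (a.2 : ℕ) = s then !(x (i, a.2)) else x (i, a.2)) ?_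
  intro x x' h
  ext a
  have : x (i, a.2) = x' (i, a.2) := h _ (by simp [runQ, hij])
  simp only [this]

theorem prob_sev_pair (i j k : Fin m) (hij : i ≠ j) (hik : i ≠ k) (s s' : ℕ)
    (hs : s + 1 + d ≤ T) (hs' : s' + 1 + d ≤ T) (hne : (j, s) ≠ (k, s')) :
    (𝔼 x : Fin m × Fin T → Bool,
      (if sev d x i j s then (1:ℝ) else 0) * (if sev d x i k s' then (1:ℝ) else 0))
      ≤ (1 / 2^(d+1))^2 := by
  by_cases hdis : j ≠ k ∨ s + d < s' ∨ s' + d < s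
  · have hD : Disjoint (runQ (T := T) d j s) (runQ (T := T) d k s') := by
      rw [Finset.disjoint_left]
      rintro ⟨a, b⟩ h1 h2
      simp only [runQ, Finset.mem_filter, Finset.mem_univ, true_and] at h1 h2
      rcases hdis with h | h
      · exact h (h1.1.symm.trans h2.1)
      · omega
    have hc : #(runQ (T := T) d j s ∪ runQ (T := T) d k s') = (d+1) * 2 := by
      rw [Finset.card_union_of_disjoint hD, card_runQ _ _ hs, card_runQ _ _ hs']
      ring
    have key := avg_det (runQ (T := T) d j s ∪ runQ (T := T) d k s')
      (fun x a => if a ∈ runQ (T := T) d j s then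
          (if (a.2 : ℕ) = s then !(x (i, a.2)) else x (i, a.2))
        else (if (a.2 : ℕ) = s' then !(x (i, a.2)) else x (i, a.2))) (by
        intro x x' h
        ext a
        have : x (i, a.2) = x' (i, a.2) := h _ (by simp [runQ, hij, hik])
        simp only [this])
    rw [hc, pow_mul] at key
    rw [div_pow, one_pow, ← key]
    apply le_of_eq
    refine Finset.expect_congr rfl fun x _ => ?_
    have hiff : (sev d x i j s ∧ sev d x i k s') ↔
        ∀ a ∈ runQ (T := T) d j s ∪ runQ (T := T) d k s', x a =
          if a ∈ runQ (T := T) d j s then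
            (if (a.2 : ℕ) = s then !(x (i, a.2)) else x (i, a.2))
          else (if (a.2 : ℕ) = s' then !(x (i, a.2)) else x (i, a.2)) := by
      rw [sev_iff x i j s hs, sev_iff x i k s' hs']
      constructor
      · rintro ⟨h1, h2⟩ a ha
        by_cases h3 : a ∈ runQ (T := T) d j s
        · rw [if_pos h3]; exact h1 a h3
        · rw [if_neg h3]; exact h2 a ((Finset.mem_union.1 ha).resolve_left h3)
      · intro h
        refine ⟨fun a ha => ?_, fun a ha => ?_⟩
        · have := h a (Finset.mem_union_left _ ha)
          rwa [if_pos ha] at this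
        · have := h a (Finset.mem_union_right _ ha)
          rwa [if_neg (Finset.disjoint_right.1 hD ha)] at this
    rw [← if_congr hiff rfl rfl]
    by_cases h1 : sev d x i j s <;> by_cases h2 : sev d x i k s' <;> simp [h1, h2]
  · push Not at hdis
    obtain ⟨rfl, h1, h2⟩ := hdis
    have hss : s ≠ s' := fun h => hne (by rw [h])
    have : ∀ x : Fin m × Fin T → Bool, 
      (if sev d x i j s then (1:ℝ) else 0) * (if sev d x i j s' then (1:ℝ) else 0) = 0 := by
      intro x
      by_cases ha : sev d x i j s
      · by_cases hb : sev d x i j s'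
        · exfalso
          rcases lt_or_gt_of_ne hss with h | h
          · apply hb.1
            have := ha.2 (s' - (s+1)) (by omega)
            rwa [show s + 1 + (s' - (s+1)) = s' by omega] at this
          · apply ha.1
            have := hb.2 (s - (s'+1)) (by omega)
            rwa [show s' + 1 + (s - (s'+1)) = s by omega] at this
        · simp [hb]
      · simp [ha]
    simp only [this]
    rw [Finset.expect_const_zero]
    positivity

/-- number of runs seen by `i` -/
noncomputable def sZ (d L : ℕ) (x : Fin m × Fin T → Bool) (i : Fin m) : ℝ :=
  ∑ p ∈ (Finset.univ.erase i) ×ˢ Finset.range L, if sev d x i p.1 p.2 then (1:ℝ) else 0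

theorem sZ_mean (L : ℕ) (hL : L + d ≤ T) (i : Fin m) :
    (𝔼 x : Fin m × Fin T → Bool, sZ d L x i) = ((m:ℝ) - 1) * (L / 2^(d+1)) := by
  unfold sZ
  rw [Finset.expect_sum_comm]
  rw [Finset.sum_congr rfl (g := fun _ => (1:ℝ) / 2^(d+1))]
  · have : 1 ≤ m := by have := i.2; omega
    simp [Finset.card_product]
    rw [Nat.cast_sub this]
    push_cast
    ring
  · rintro ⟨j, s⟩ hp
    simp only [Finset.mem_product, Finset.mem_erase, Finset.mem_univ, and_true,
      Finset.mem_range] at hp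
    exact prob_sev i j (Ne.symm hp.1) s (by omega)

theorem sZ_sq (L : ℕ) (hL : L + d ≤ T) (i : Fin m) :
    (𝔼 x : Fin m × Fin T → Bool, (sZ d L x i)^2) ≤
      ((m:ℝ) - 1) * (L / 2^(d+1)) + (((m:ℝ) - 1) * (L / 2^(d+1)))^2 := by
  unfold sZ
  simp only [sq, Finset.sum_mul_sum]
  rw [Finset.expect_sum_comm]
  simp only [Finset.expect_sum_comm]
  have hm : 1 ≤ m := by have := i.2; omega
  have hcard : ((#((Finset.univ.erase i) ×ˢ Finset.range L) : ℕ) : ℝ) = ((m:ℝ) - 1) * L := by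
    rw [Finset.card_product, Finset.card_erase_of_mem (Finset.mem_univ _)]
    simp only [Finset.card_univ, Fintype.card_fin, Finset.card_range]
    rw [Nat.cast_mul, Nat.cast_sub hm, Nat.cast_one]
  calc _ ≤ ∑ p ∈ (Finset.univ.erase i) ×ˢ Finset.range L,
        ∑ p' ∈ (Finset.univ.erase i) ×ˢ Finset.range L,
          ((if p = p' then (1:ℝ) / 2^(d+1) else 0) + ((1:ℝ) / 2^(d+1))^2) := by
        refine Finset.sum_le_sum fun p hp => Finset.sum_le_sum fun p' hp' => ?_
        obtain ⟨j, s⟩ := p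
        obtain ⟨k, s'⟩ := p'
        simp only [Finset.mem_product, Finset.mem_erase, Finset.mem_univ, and_true,
          Finset.mem_range] at hp hp'
        split_ifs with h
        · simp only [Prod.mk.injEq] at h
          obtain ⟨rfl, rfl⟩ := h
          have h1 := prob_sev (T := T) (d := d) i j (Ne.symm hp.1) s (by omega)
          have h2 : ∀ x : Fin m × Fin T → Bool, (if sev d x i j s then (1:ℝ) else 0) *
            (if sev d x i j s then (1:ℝ) else 0) = if sev d x i j s then (1:ℝ) else 0 := by
            intro x; split_ifs <;> simp
          simp only [h2, h1]
          have : (0:ℝ) ≤ (1 / 2^(d+1))^2 := by positivity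
          linarith
        · rw [zero_add]
          exact prob_sev_pair i j k (Ne.symm hp.1) (Ne.symm hp'.1) s s' (by omega) (by omega) h
    _ = _ := by
        simp only [Finset.sum_add_distrib, Finset.sum_const, nsmul_eq_mul, hcard,
          Finset.sum_ite_eq]
        rw [Finset.sum_congr rfl (fun p hp => if_pos hp)]
        simp only [Finset.sum_const, nsmul_eq_mul, hcard]
        ring

theorem sZ_cover (q0 : Fin m → ZMod (2^d)) (hq : Function.Injective q0) (L : ℕ)
    (hL : L + d ≤ T) (x : Fin m × Fin T → Bool) :
    ∑ i, sZ d L x i ≤ 2 * ∑ i, (if i ∈ salive q0 x T then 0 else sZ d L x i) := by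
  let I : Fin m → Fin m → ℕ → ℝ := fun i j s =>
    if i ≠ j ∧ sev d x i j s then 1 else 0
  have hZ : ∀ i, sZ d L x i = ∑ j, ∑ s ∈ Finset.range L, I i j s := by
    intro i
    unfold sZ
    rw [Finset.sum_product, ← Finset.sum_erase (a := i) Finset.univ]
    · refine Finset.sum_congr rfl fun j hj => Finset.sum_congr rfl fun s _ => ?_
      have : i ≠ j := (Finset.ne_of_mem_erase hj).symm
      simp [I, this]
    · simp [I]
  let D : Fin m → ℝ := fun i => if i ∈ salive q0 x T then 0 else 1
  have hD : ∀ i, (if i ∈ salive q0 x T then 0 else sZ d L x i)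
      = ∑ j, ∑ s ∈ Finset.range L, D i * I i j s := by
    intro i
    simp only [← Finset.mul_sum, ← hZ, D]
    split_ifs <;> simp
  have hsymm : ∑ i, ∑ j, ∑ s ∈ Finset.range L, D i * I i j s
      = ∑ i, ∑ j, ∑ s ∈ Finset.range L, D j * I i j s := by
    rw [Finset.sum_comm]
    refine Finset.sum_congr rfl fun i _ => Finset.sum_congr rfl fun j _ =>
      Finset.sum_congr rfl fun s _ => ?_
    congr 1
    simp only [I]
    refine if_congr ?_ rfl rfl
    rw [ne_comm, sev_symm]
  simp only [hD]
  rw [two_mul]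
  nth_rewrite 2 [hsymm]
  simp only [hZ, ← Finset.sum_add_distrib]
  refine Finset.sum_le_sum fun i _ => Finset.sum_le_sum fun j _ =>
      Finset.sum_le_sum fun s hs => ?_
  have hs := Finset.mem_range.1 hs
  by_cases h : i ≠ j ∧ sev d x i j s
  · simp only [I, if_pos h, mul_one, D]
    by_cases hi : i ∈ salive q0 x T
    · by_cases hj : j ∈ salive q0 x T
      · exact (sev_lost q0 hq x i j h.1 s (by omega) h.2 hi hj).elim
      · simp [hi, hj]
    · simp only [hi, if_false]
      split_ifs <;> norm_num
  · simp [I, if_neg h]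

theorem alive_bound (q0 : Fin m → ZMod (2^d)) (hq : Function.Injective q0) (L : ℕ)
    (hL : L + d ≤ T) (hL1 : 1 ≤ L) :
    (𝔼 x : Fin m × Fin T → Bool, (#(salive q0 x T) : ℝ)) ≤
      m - (3 * ((m:ℝ) - 1) - 2^(d+1) / L) / 16 := by
  have hLr : (1:ℝ) ≤ L := by exact_mod_cast hL1
  have hLp : (0:ℝ) < L := by linarith
  rcases Nat.eq_zero_or_pos m with hm0 | hm
  · subst hm0
    have : ∀ x : Fin 0 × Fin T → Bool, (#(salive q0 x T) : ℝ) = 0 := by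
      intro x
      simp [Finset.eq_empty_of_isEmpty]
    simp only [this, Finset.expect_const_zero]
    have : (0:ℝ) ≤ 2^(d+1) / L := by positivity
    push_cast
    linarith
  · have hm1 : (1:ℝ) ≤ m := by exact_mod_cast hm
    set E := 𝔼 x : Fin m × Fin T → Bool, (#(salive q0 x T) : ℝ) with hE
    set μ : ℝ := L / 2^(d+1) with hμ
    have hμp : 0 < μ := by positivity
    set y : ℝ := ((m:ℝ) - 1) * μ with hy
    have hy0 : 0 ≤ y := mul_nonneg (by linarith) hμp.le
    set α : ℝ := 2 * (1 + y) with hα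
    have hαp : 0 < α := by positivity
    have hx : ∀ x : Fin m × Fin T → Bool, ∑ i, sZ d L x i ≤
        α * (m - (#(salive q0 x T) : ℝ)) + (∑ i, (sZ d L x i)^2) * α⁻¹ := by
      intro x
      refine (sZ_cover q0 hq L hL x).trans ?_
      have hc : ((m:ℝ) - (#(salive q0 x T) : ℝ))
          = ∑ i, (if i ∈ salive q0 x T then (0:ℝ) else 1) := by
        have : ∀ i, (if i ∈ salive q0 x T then (0:ℝ) else 1)
          = 1 - (if i ∈ salive q0 x T then (1:ℝ) else 0) := by
          intro i; split_ifs <;> simp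
        simp only [this, Finset.sum_sub_distrib]
        simp
      rw [hc, Finset.mul_sum, Finset.mul_sum, Finset.sum_mul, ← Finset.sum_add_distrib]
      refine Finset.sum_le_sum fun i _ => ?_
      split_ifs
      · have : 0 ≤ (sZ d L x i)^2 * α⁻¹ := by positivity
        linarith
      · have h1 : 0 ≤ (α - sZ d L x i)^2 * α⁻¹ := by positivity
        have h2 : (α - sZ d L x i)^2 * α⁻¹
            = α * 1 + (sZ d L x i)^2 * α⁻¹ - 2 * sZ d L x i := by
          field_simp
          ring
        linarith
    have h1 : (𝔼 x : Fin m × Fin T → Bool, ∑ i, sZ d L x i) ≤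
        𝔼 x : Fin m × Fin T → Bool,
          (α * (m - (#(salive q0 x T) : ℝ)) + (∑ i, (sZ d L x i)^2) * α⁻¹) :=
      Finset.expect_le_expect fun x _ => hx x
    rw [Finset.expect_sum_comm, Finset.expect_add_distrib, ← Finset.mul_expect,
      Finset.expect_sub_distrib, ← hE, ← Finset.expect_mul, Finset.expect_sum_comm,
      Fintype.expect_const] at h1
    simp only [sZ_mean L hL, ← hμ, ← hy] at h1
    have h2 : ∑ i : Fin m, (𝔼 x : Fin m × Fin T → Bool, (sZ d L x i)^2) ≤ m * (y + y^2) := by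
      refine (Finset.sum_le_sum fun i _ => sZ_sq L hL i).trans ?_
      simp only [Finset.sum_const, Finset.card_univ, Fintype.card_fin, nsmul_eq_mul, hy, hμ]
      exact le_rfl
    have h3 : m * y ≤ α * (m - E) + m * (y + y^2) * α⁻¹ := by
      have := mul_le_mul_of_nonneg_right h2 (inv_nonneg.2 hαp.le)
      simp only [Finset.sum_const, Finset.card_univ, Fintype.card_fin, nsmul_eq_mul] at h1
      linarith
    have h4 : (m:ℝ) * (y + y^2) * α⁻¹ = m * y / 2 := by
      rw [hα]; field_simp
    rw [h4] at h3
    have h5 : (2:ℝ)^(d+1) / L = 1 / μ := by rw [hμ]; field_simp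
    rw [h5]
    have h6 : m * y / 4 ≤ (1 + y) * (m - E) := by rw [hα] at h3; linarith
    have h7 : m * μ = μ + y := by rw [hy]; ring
    have h8 : (3 * ((m:ℝ) - 1) - 1 / μ) * μ = 3 * y - 1 := by
      rw [hy]; field_simp
    have h9 : (3 * ((m:ℝ) - 1) - 1 / μ) / 16 ≤ m - E := by
      have hp : 0 < (1 + y) * μ := by positivity
      refine le_of_mul_le_mul_right ?_ hp
      have e1 : (3 * ((m:ℝ) - 1) - 1 / μ) / 16 * ((1 + y) * μ) = (3 * y - 1) * (1 + y) / 16 := by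
        rw [← h8]; ring
      rw [e1]
      have e2 : (m * y / 4) * μ ≤ (1 + y) * (m - E) * μ := mul_le_mul_of_nonneg_right h6 hμp.le
      have e3 : (m * y / 4) * μ = (μ + y) * y / 4 := by rw [← h7]; ring
      nlinarith [sq_nonneg (y - 1), mul_nonneg hμp.le hy0]
    linarith

end streams

theorem opA_card_bound {d : ℕ} (L : ℕ) (hL1 : 1 ≤ L) (S : Finset (ZMod (2^d))) :
    (opA (2^d) ^ (L + d)) (fun S => (#S : ℝ)) S ≤
      #S - (3 * ((#S:ℝ) - 1) - 2^(d+1) / L) / 16 := by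
  let q0 : Fin (#S) → ZMod (2^d) := fun i => (S.equivFin.symm i : ZMod (2^d))
  have hq : Function.Injective q0 := fun a b h => S.equivFin.symm.injective (Subtype.ext h)
  have hS : Finset.univ.image q0 = S := by
    ext z
    simp only [Finset.mem_image, Finset.mem_univ, true_and, q0]
    constructor
    · rintro ⟨a, rfl⟩; exact (S.equivFin.symm a).2
    · intro hz; exact ⟨S.equivFin ⟨z, hz⟩, by simp⟩
  have h1 := stream_law (T := L + d) q0 hq (L + d) le_rfl (fun S => (#S : ℝ))
  rw [hS] at h1
  rw [← h1]
  refine le_trans (le_of_eq ?_) (alive_bound (T := L + d) q0 hq L le_rfl hL1)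
  refine Finset.expect_congr rfl fun x _ => ?_
  rw [Finset.card_image_of_injOn (salive_inj q0 hq x _)]

theorem hitP_rec {d : ℕ} (L : ℕ) (hL1 : 1 ≤ L) (t : ℕ) :
    hitP (2^d) (t + (L + d)) 0 ≤ 13 / 16 * hitP (2^d) t 0 + (3 / 2^d + 2 / L) / 16 := by
  have hH : (0:ℝ) < 2^d := by positivity
  have hLp : (0:ℝ) < L := by exact_mod_cast hL1
  have h1 := card_eq_hitP (d := d) (t + (L + d))
  have h2 := card_eq_hitP (d := d) t
  rw [pow_add, Module.End.mul_apply] at h1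
  have h3 : (opA (2^d) ^ (L + d)) (fun S => (#S : ℝ)) ≤
      (13 / 16 : ℝ) • (fun S : Finset (ZMod (2^d)) => (#S : ℝ))
        + (fun _ : Finset (ZMod (2^d)) => (3 + 2^(d+1) / (L:ℝ)) / 16) := by
    intro S
    have := opA_card_bound L hL1 S
    simp only [Pi.add_apply, Pi.smul_apply, smul_eq_mul]
    linarith
  have h4 := opA_pow_mono (2^d) t _ _ h3 Finset.univ
  rw [map_add, map_smul, opA_pow_const, h1] at h4
  simp only [Pi.add_apply, Pi.smul_apply, smul_eq_mul, h2] at h4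
  refine le_of_mul_le_mul_left ?_ hH
  refine h4.trans (le_of_eq ?_)
  rw [pow_succ]
  field_simp

theorem hitP_anti {d : ℕ} : Antitone (fun t => hitP (2^d) t 0) := by
  refine antitone_nat_of_succ_le fun t => ?_
  have hH : (0:ℝ) < 2^d := by positivity
  have h1 := card_eq_hitP (d := d) (t + 1)
  have h2 := card_eq_hitP (d := d) t
  refine le_of_mul_le_mul_left ?_ hH
  rw [← h1, ← h2, pow_succ, Module.End.mul_apply]
  refine opA_pow_mono (2^d) t _ _ ?_ _
  intro S
  rw [opA_apply]
  refine Finset.expect_le Finset.univ_nonempty fun β _ => ?_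
  have : #(stepSet β S) ≤ #S := Finset.card_image_le
  exact (Nat.cast_le (α := ℝ)).2 this

theorem sum_bound (d : ℕ) (P : ℕ → ℝ) (hP : Antitone P) (h0 : P 0 ≤ 1)
    (hrec : ∀ L : ℕ, 1 ≤ L → ∀ t, P (t + (L + d)) ≤ 13 / 16 * P t + (3 / 2^d + 2 / L) / 16)
    (W : ℕ) : ∑ j ∈ Finset.range W, P j ≤ 38 * d + 2 * (W / 2^d) := by
  have hH : (0:ℝ) < 1 / 2^d := by positivity
  set Q : ℕ → ℝ := fun j => max (P j - 1 / 2^d) 0 with hQ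
  have hQa : Antitone Q := fun a b h => max_le_max (by linarith [hP h]) le_rfl
  have hQ0 : ∀ j, 0 ≤ Q j := fun j => le_max_right _ _
  have hrecQ : ∀ L : ℕ, 1 ≤ L → ∀ t, Q (t + (L + d)) ≤ 13 / 16 * Q t + (1 / L) / 8 := by
    intro L hL t
    have hLp : (0:ℝ) < 1 / L := by have : (0:ℝ) < L := by exact_mod_cast hL
                                   positivity
    refine max_le ?_ (by linarith [hQ0 t])
    have h1 := hrec L hL t
    have h2 : P t - 1 / 2^d ≤ Q t := le_max_left _ _
    have e1 : (3:ℝ) / 2^d = 3 * (1 / 2^d) := by ring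
    have e2 : (2:ℝ) / L = 2 * (1 / L) := by ring
    rw [e1, e2] at h1
    linarith
  have key : ∀ K : ℕ, ∃ τ : ℕ, Q τ ≤ (15/16:ℝ)^K ∧
      ∑ j ∈ Finset.range τ, Q j ≤ 2 * K + 16 * d * (1 - (15/16:ℝ)^K) := by
    intro K
    induction K with
    | zero => exact ⟨0, by rw [pow_zero]; exact max_le (by linarith) zero_le_one, by simp⟩
    | succ K ih =>
      obtain ⟨τ, h1, h2⟩ := ih
      set r : ℝ := (15/16:ℝ)^K with hr
      have hrp : 0 < r := by positivity
      have hr1 : r ≤ 1 := pow_le_one₀ (by norm_num) (by norm_num)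
      have hinv : 1 ≤ r⁻¹ := (one_le_inv₀ hrp).2 hr1
      set L := ⌈r⁻¹⌉₊ with hL
      have hLge : r⁻¹ ≤ L := Nat.le_ceil _
      have hLle : (L:ℝ) < r⁻¹ + 1 := Nat.ceil_lt_add_one (by positivity)
      have hL1 : 1 ≤ L := by
        have : (1:ℝ) ≤ L := hinv.trans hLge
        exact_mod_cast this
      have hLi : 1 / (L:ℝ) ≤ r := by
        rw [one_div]
        exact inv_le_of_inv_le₀ hrp hLge
      refine ⟨τ + (L + d), ?_, ?_⟩
      · have := hrecQ L hL1 τ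
        rw [pow_succ, ← hr]
        linarith
      · rw [Finset.sum_range_add]
        have h3 : ∑ x ∈ Finset.range (L + d), Q (τ + x) ≤ (L + d) * r := by
          have := Finset.sum_le_card_nsmul (Finset.range (L + d)) (fun x => Q (τ + x)) r
            (fun x _ => (hQa (Nat.le_add_right _ _)).trans h1)
          simpa using this
        have h4 : (L:ℝ) * r ≤ 2 := by
          have := mul_le_mul_of_nonneg_right hLle.le hrp.le
          rw [add_mul, inv_mul_cancel₀ hrp.ne'] at this
          linarith
        rw [pow_succ, ← hr]
        push_cast
        linarith
  obtain ⟨τ, h1, h2⟩ := key (11 * d)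
  have hr : (15/16:ℝ)^(11*d) ≤ 1 / 2^d := by
    rw [pow_mul, ← one_div_pow]
    exact pow_le_pow_left₀ (by norm_num) (by norm_num) d
  have hrp : (0:ℝ) < (15/16:ℝ)^(11*d) := by positivity
  have hd : (0:ℝ) ≤ d := Nat.cast_nonneg d
  have h3 : ∑ j ∈ Finset.range W, Q j ≤ 38 * d + W * (1 / 2^d) := by
    have e1 : ∑ j ∈ Finset.range W, Q j ≤ ∑ j ∈ Finset.range (τ + W), Q j :=
      Finset.sum_le_sum_of_subset_of_nonneg (Finset.range_subset_range.2 (by omega))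
        (fun j _ _ => hQ0 j)
    rw [Finset.sum_range_add] at e1
    have e2 : ∑ x ∈ Finset.range W, Q (τ + x) ≤ W * (1 / 2^d) := by
      have := Finset.sum_le_card_nsmul (Finset.range W) (fun x => Q (τ + x)) (1 / 2^d)
        (fun x _ => (hQa (Nat.le_add_right _ _)).trans (h1.trans hr))
      simpa using this
    push_cast at h2
    nlinarith
  have h4 : ∑ j ∈ Finset.range W, P j ≤ ∑ j ∈ Finset.range W, (Q j + 1 / 2^d) :=
    Finset.sum_le_sum fun j _ => by
      have : P j - 1 / 2^d ≤ Q j := le_max_left _ _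
      linarith
  rw [Finset.sum_add_distrib] at h4
  simp only [Finset.sum_const, Finset.card_range, nsmul_eq_mul] at h4
  have : (W:ℝ) / 2^d = W * (1 / 2^d) := by ring
  rw [this]
  linarith

/-- reached set in the wrapped model -/
def reach {H W : ℕ} [NeZero H] (β : ZMod H × ZMod W → Bool) (t0 : ZMod W) :
    ℕ → Finset (ZMod H)
  | 0 => Finset.univ
  | j + 1 => stepSet (fun h => β (h, t0 + j)) (reach β t0 j)

theorem bstep_mem {H W : ℕ} [NeZero H] (β : ZMod H × ZMod W → Bool) (t0 : ZMod W) (u : ZMod H)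
    (j : ℕ) : ((bstep H W β)^[j] (u, t0)).1 ∈ reach β t0 j ∧
      ((bstep H W β)^[j] (u, t0)).2 = t0 + j := by
  induction j with
  | zero => simp [reach]
  | succ j ih =>
    rw [Function.iterate_succ_apply']
    generalize (bstep H W β)^[j] (u, t0) = w at ih
    obtain ⟨w1, w2⟩ := w
    obtain ⟨h1, h2⟩ := ih
    simp only at h1 h2
    subst h2
    refine ⟨Finset.mem_image.2 ⟨w1, h1, rfl⟩, ?_⟩
    simp [bstep, add_assoc]

theorem reach_law {H W : ℕ} [NeZero H] [NeZero W] (t0 : ZMod W) (j : ℕ) (hj : j ≤ W)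
    (g : Finset (ZMod H) → ℝ) :
    (𝔼 β : ZMod H × ZMod W → Bool, g (reach β t0 j)) = (opA H ^ j) g Finset.univ := by
  induction j generalizing g with
  | zero => simp [reach]
  | succ j ih =>
    rw [pow_succ, Module.End.mul_apply, ← ih (by omega)]
    let e : ZMod H → ZMod H × ZMod W := fun h => (h, t0 + j)
    have he : Function.Injective e := fun a b h => congrArg Prod.fst h
    rw [← avg_resample e he]
    refine Finset.expect_congr rfl fun x _ => ?_
    rw [opA_apply]
    refine Finset.expect_congr rfl fun y _ => ?_
    have h1 : ∀ i ≤ j, reach (Function.extend e y x) t0 i = reach x t0 i := by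
      intro i hi
      induction i with
      | zero => rfl
      | succ i ihi =>
        simp only [reach]
        rw [ihi (by omega)]
        congr 1
        ext h
        apply Function.extend_apply'
        rintro ⟨a, ha⟩
        have h2 := congrArg Prod.snd ha
        simp only [e, add_right_inj] at h2
        have h3 := (ZMod.natCast_eq_natCast_iff' _ _ _).1 h2
        rw [Nat.mod_eq_of_lt (by omega), Nat.mod_eq_of_lt (by omega)] at h3
        omega
    simp only [reach]
    rw [h1 j le_rfl]
    congr 2
    ext h
    exact he.extend_apply y x h

theorem count_bound (d W : ℕ) [NeZero W] (v : ZMod (2^d) × ZMod W) :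
    (Nat.card {p : ZMod W × (ZMod (2^d) × ZMod W → Bool) //
        ∃ u : ZMod (2^d), ∃ j < W, (bstep (2^d) W p.2)^[j] (u, p.1) = v} : ℝ)
      ≤ 2 ^ (2^d * W) * ∑ j ∈ Finset.range W, hitP (2^d) j 0 := by
  classical
  rw [Nat.card_eq_fintype_card, Fintype.card_subtype]
  have hsub : (Finset.univ.filter (fun p : ZMod W × (ZMod (2^d) × ZMod W → Bool) =>
      ∃ u : ZMod (2^d), ∃ j < W, (bstep (2^d) W p.2)^[j] (u, p.1) = v)) ⊆
      (Finset.range W).biUnion (fun j =>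
        (Finset.univ.filter (fun β : ZMod (2^d) × ZMod W → Bool =>
          v.1 ∈ reach β (v.2 - j) j)).image (fun β => (v.2 - (j : ZMod W), β))) := by
    rintro ⟨t0, β⟩ hp
    obtain ⟨u, j, hj, h⟩ := (Finset.mem_filter.1 hp).2
    simp only at h
    obtain ⟨h1, h2⟩ := bstep_mem β t0 u j
    rw [h] at h1 h2
    have h3 : v.2 - (j : ZMod W) = t0 := by rw [h2]; ring
    refine Finset.mem_biUnion.2 ⟨j, Finset.mem_range.2 hj, Finset.mem_image.2 ⟨β, ?_, ?_⟩⟩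
    · simp [h3, h1]
    · rw [h3]
  have h1 := (Finset.card_le_card hsub).trans Finset.card_biUnion_le
  have h2 : ∀ j ∈ Finset.range W,
      (#((Finset.univ.filter (fun β : ZMod (2^d) × ZMod W → Bool =>
          v.1 ∈ reach β (v.2 - j) j)).image (fun β => (v.2 - (j : ZMod W), β))) : ℝ) ≤
        2 ^ (2^d * W) * hitP (2^d) j 0 := by
    intro j hj
    rw [← hitP_const j v.1]
    unfold hitP
    rw [← reach_law (v.2 - (j : ZMod W)) j (Finset.mem_range.1 hj).le]
    have hcard : (Fintype.card (ZMod (2^d) × ZMod W → Bool) : ℝ) = 2 ^ (2^d * W) := by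
      simp [ZMod.card]
    rw [← hcard, Fintype.card_mul_expect]
    simp only [Finset.sum_boole]
    exact_mod_cast Finset.card_image_le
  calc _ ≤ _ := (Nat.cast_le (α := ℝ)).2 h1
    _ ≤ ∑ j ∈ Finset.range W, 2 ^ (2^d * W) * hitP (2^d) j 0 := by
        push_cast
        exact Finset.sum_le_sum h2
    _ = _ := by rw [Finset.mul_sum]

end work

/-- In the nonmonotone ensemble on `Ω_{H,W}` (`H = 2^d`,
`W > d`), the Las Vegas exploration picks a uniformly random time slice `t₀` and
follows the paths from all vertices of slice `t₀` forward for `W` steps, reading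
the bit of every visited vertex.  There is a universal constant `C` such that
each fixed input bit is read with probability at most
`C·(W⁻¹·log H + H⁻¹)` (probability over the uniform slice `t₀` and the uniform
input bits `β`). -/
theorem statement8 :
    ∃ C > (0 : ℝ), ∀ d H W : ℕ, H = 2 ^ d → d < W →
      ∀ v : ZMod H × ZMod W,
        (Nat.card {p : ZMod W × (ZMod H × ZMod W → Bool) //
            ∃ u : ZMod H, ∃ j < W, (bstep H W p.2)^[j] (u, p.1) = v} : ℝ)
            / ((W : ℝ) * 2 ^ (H * W))
          ≤ C * (Real.log H / W + 1 / H) := by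
  refine ⟨60, by norm_num, ?_⟩
  intro d H W hH hdW v
  subst hH
  have : NeZero W := ⟨by omega⟩
  have hWp : (0:ℝ) < W := by exact_mod_cast (by omega : 0 < W)
  have h1 := count_bound d W v
  have h0 : hitP (2^d) 0 0 ≤ 1 := by simp [hitP]
  have h2 := sum_bound d (fun t => hitP (2^d) t 0) hitP_anti h0 (fun L hL t => hitP_rec L hL t) W
  have hp : (0:ℝ) < 2 ^ (2^d * W) := by positivity
  rw [div_le_iff₀ (by positivity)]
  refine h1.trans ?_
  have hlog : Real.log ((2^d : ℕ) : ℝ) = d * Real.log 2 := by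
    push_cast
    rw [Real.log_pow]
  rw [hlog]
  have hl2 : (0.69 : ℝ) ≤ Real.log 2 := by
    have := Real.log_two_gt_d9
    linarith
  have hd : (0:ℝ) ≤ d := Nat.cast_nonneg d
  have e : 60 * (d * Real.log 2 / W + 1 / ((2^d : ℕ) : ℝ)) * (W * 2 ^ (2^d * W))
      = 2 ^ (2^d * W) * (60 * (d * Real.log 2) + 60 * (W / 2^d)) := by
    push_cast
    field_simp
  rw [e]
  refine mul_le_mul_of_nonneg_left (h2.trans ?_) hp.le
  have h5 : (0:ℝ) ≤ W / 2^d := by positivity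
  nlinarith [mul_le_mul_of_nonneg_left hl2 hd]
end

section
/- In the nonmonotone ensemble on the wrapped extended butterfly Ω_{H,W} with W = H (H = 2^d), let a particle start at a uniformly random vertex and repeatedly follow the unique outgoing edge of the random out-degree-one subgraph, stopping the first time it reaches a vertex it has already visited. There is a universal constant C such that the expected number of distinct vertices visited is at most C·H. -/
namespace BF

section gen
variable {α : Type*} [DecidableEq α]

def Ind (nx : α → Bool → α) : ℕ → (α → Bool) → α → Finset α → ℝ
  | 0, _, _, _ => 1
  | k+1, β, x, A => if nx x (β x) ∈ A then 0 else
      Ind nx k β (nx x (β x)) (insert (nx x (β x)) A)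

noncomputable def U (nx : α → Bool → α) : ℕ → α → Finset α → ℝ
  | 0, _, _ => 1
  | k+1, x, A =>
     ((if nx x true ∈ A then 0 else U nx k (nx x true) (insert (nx x true) A)) +
     (if nx x false ∈ A then 0 else U nx k (nx x false) (insert (nx x false) A))) / 2

lemma Ind_nonneg (nx : α → Bool → α) (k : ℕ) : ∀ β x A, 0 ≤ Ind nx k β x A := by
  induction k with
  | zero => intros; simp [Ind]
  | succ k ih => intro β x A; simp only [Ind]; split_ifs; exacts [le_rfl, ih _ _ _]

lemma Ind_zero_or (nx : α → Bool → α) (k : ℕ) : ∀ β x A, Ind nx k β x A = 0 ∨ Ind nx k β x A = 1 := by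
  induction k with
  | zero => intros; simp [Ind]
  | succ k ih => intro β x A; simp only [Ind]; split_ifs; exacts [Or.inl rfl, ih _ _ _]

lemma U_nonneg (nx : α → Bool → α) (k : ℕ) : ∀ x A, 0 ≤ U nx k x A := by
  induction k with
  | zero => intros; simp [U]
  | succ k ih =>
    intro x A; simp only [U]
    have h1 := ih (nx x true) (insert (nx x true) A)
    have h2 := ih (nx x false) (insert (nx x false) A)
    split_ifs <;> linarith

lemma U_le_one (nx : α → Bool → α) (k : ℕ) : ∀ x A, U nx k x A ≤ 1 := by
  induction k with
  | zero => intros; simp [U]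
  | succ k ih =>
    intro x A; simp only [U]
    have h1 := ih (nx x true) (insert (nx x true) A)
    have h2 := ih (nx x false) (insert (nx x false) A)
    split_ifs <;> linarith

lemma Ind_update (nx : α → Bool → α) (k : ℕ) : ∀ β x A y b, y ∈ A → y ≠ x →
    Ind nx k (Function.update β y b) x A = Ind nx k β x A := by
  induction k with
  | zero => intros; simp [Ind]
  | succ k ih =>
    intro β x A y b hy hyx
    simp only [Ind]
    rw [Function.update_of_ne hyx.symm]
    split_ifs with h
    · rfl
    · apply ih
      · exact Finset.mem_insert_of_mem hy
      · rintro rfl; exact h hy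

lemma sum_update [Fintype α] (f : (α → Bool) → ℝ) (x : α) :
    ∑ β : α → Bool, f β = (∑ β : α → Bool,
      (f (Function.update β x true) + f (Function.update β x false))) / 2 := by
  have hinv : Function.Involutive (fun β : α → Bool => Function.update β x (!(β x))) := by
    intro β; simp
  have h1 : ∑ β : α → Bool, f (Function.update β x (!(β x))) = ∑ β, f β :=
    Equiv.sum_comp hinv.toPerm f
  have h2 : ∀ β : α → Bool, f (Function.update β x true) + f (Function.update β x false)
      = f β + f (Function.update β x (!(β x))) := by
    intro β
    have e := Function.update_eq_self x β
    cases h : β x <;> rw [h] at e <;> simp [e, add_comm]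
  rw [Finset.sum_congr rfl (fun β _ => h2 β), Finset.sum_add_distrib, h1]
  ring

lemma sum_Ind [Fintype α] (nx : α → Bool → α) (k : ℕ) : ∀ x A, x ∈ A →
    ∑ β : α → Bool, Ind nx k β x A = 2 ^ (Fintype.card α) * U nx k x A := by
  induction k with
  | zero => intro x A _; simp [Ind, U]
  | succ k ih =>
    intro x A hx
    rw [sum_update _ x]
    have key : ∀ b, ∑ β : α → Bool, Ind nx (k+1) (Function.update β x b) x A
        = 2 ^ (Fintype.card α) *
          (if nx x b ∈ A then 0 else U nx k (nx x b) (insert (nx x b) A)) := by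
      intro b
      simp only [Ind, Function.update_self]
      split_ifs with h
      · simp
      · rw [← ih _ _ (Finset.mem_insert_self _ _)]
        apply Finset.sum_congr rfl
        intro β _
        apply Ind_update
        · exact Finset.mem_insert_of_mem hx
        · rintro h'; rw [← h'] at h; exact h hx
    rw [Finset.sum_add_distrib, key, key]
    simp only [U]
    ring

lemma Ind_closed (nx : α → Bool → α) (k : ℕ) : ∀ (β : α → Bool) x (A : Finset α), x ∈ A →
    (∀ a ∈ A, a = x ∨ nx a (β a) ∈ A) → Ind nx k β x A = 0 →
    ∃ B : Finset α, A ⊆ B ∧ (∀ a ∈ B, nx a (β a) ∈ B) ∧ B.card + 1 ≤ A.card + k := by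
  induction k with
  | zero => intro β x A _ _ h; simp [Ind] at h
  | succ k ih =>
    intro β x A hx hA h
    simp only [Ind] at h
    split_ifs at h with hm
    · refine ⟨A, subset_rfl, ?_, by omega⟩
      intro a ha
      rcases hA a ha with rfl | h'
      exacts [hm, h']
    · obtain ⟨B, h1, h2, h3⟩ := ih β _ _ (Finset.mem_insert_self _ _) (by
        intro a ha
        rcases Finset.mem_insert.1 ha with rfl | ha
        · exact Or.inl rfl
        · rcases hA a ha with rfl | h'
          · right; exact Finset.mem_insert_self _ _
          · right; exact Finset.mem_insert_of_mem h') h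
      rw [Finset.card_insert_of_notMem hm] at h3
      exact ⟨B, (Finset.subset_insert _ _).trans h1, h2, by omega⟩

lemma card_orbit_le [Fintype α] (nx : α → Bool → α) (β : α → Bool) (v : α) :
    (Nat.card {u : α // ∃ j, (fun x => nx x (β x))^[j] v = u} : ℝ)
      ≤ ∑ k ∈ Finset.range (Fintype.card α), Ind nx k β v {v} := by
  set c := Nat.card {u : α // ∃ j, (fun x => nx x (β x))^[j] v = u} with hc
  have hcn : c ≤ Fintype.card α := by
    rw [hc, ← Nat.card_eq_fintype_card]
    exact Nat.card_le_card_of_injective _ Subtype.val_injective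
  have h1 : ∀ k ∈ Finset.range c, Ind nx k β v {v} = 1 := by
    intro k hk
    rcases Ind_zero_or nx k β v {v} with h | h
    · exfalso
      obtain ⟨B, b1, b2, b3⟩ := Ind_closed nx k β v {v} (by simp) (by simp) h
      have : c ≤ B.card := by
        have hit : ∀ j, (fun x => nx x (β x))^[j] v ∈ B := by
          intro j
          induction j with
          | zero => exact b1 (by simp)
          | succ j ihj => rw [Function.iterate_succ_apply']; exact b2 _ ihj
        have hB : Nat.card B = B.card := by simp
        rw [hc, ← hB]
        apply Nat.card_le_card_of_injective
          (fun u : {u : α // ∃ j, (fun x => nx x (β x))^[j] v = u} =>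
            (⟨u.1, by obtain ⟨j, hj⟩ := u.2; rw [← hj]; exact hit j⟩ : B))
        intro u w huw
        apply Subtype.ext
        exact congrArg (fun z : B => z.1) huw
      simp at b3 hk
      omega
    · exact h
  calc (c : ℝ) = ∑ k ∈ Finset.range c, Ind nx k β v {v} := by
        rw [Finset.sum_congr rfl h1]; simp
    _ ≤ _ := Finset.sum_le_sum_of_subset_of_nonneg
        (Finset.range_subset_range.2 hcn) (fun _ _ _ => Ind_nonneg _ _ _ _ _)

end gen

section walk

noncomputable def P (H : ℕ) : ℕ → ZMod H → ZMod H → ℝ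
  | 0, h, z => if h = z then 1 else 0
  | j+1, h, z => (P H j (2*h+1) z + P H j (2*h) z) / 2

lemma P_eq (H : ℕ) (j : ℕ) : ∀ h z : ZMod H, P H j h z =
    (∑ b ∈ Finset.range (2^j), if (2^j * h + (b:ZMod H)) = z then (1:ℝ) else 0) / 2^j := by
  induction j with
  | zero => intro h z; simp only [P, pow_zero, Finset.range_one, Finset.sum_singleton, one_mul, Nat.cast_zero, add_zero, div_one]
  | succ j ih =>
    intro h z
    simp only [P]
    rw [ih, ih, pow_succ 2 j, mul_two, Finset.sum_range_add]
    have e1 : ∀ b : ℕ, (2^j + 2^j : ZMod H) * h + (b:ZMod H) = 2^j * (2*h) + b := by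
      intro b; ring
    have e2 : ∀ b : ℕ, (2^(j+1) : ZMod H) * h + ((2^j + b : ℕ):ZMod H) = 2^j * (2*h+1) + b := by
      intro b; push_cast; ring
    have e3 : ∀ b : ℕ, (2^(j+1) : ZMod H) * h + (b:ZMod H) = 2^j * (2*h) + b := by
      intro b; ring
    simp only [e2, e3]
    field_simp
    ring

lemma cast_inj {H : ℕ} {a b : ℕ} (ha : a < H) (hb : b < H) (h : (a : ZMod H) = b) : a = b := by
  have := (ZMod.natCast_eq_natCast_iff' a b H).1 h
  rwa [Nat.mod_eq_of_lt ha, Nat.mod_eq_of_lt hb] at this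

lemma P_nonneg (H : ℕ) (j : ℕ) (h z : ZMod H) : 0 ≤ P H j h z := by
  rw [P_eq]; positivity

lemma P_le (H d : ℕ) (hH : H = 2^d) (j : ℕ) (hj : j ≤ d) (h z : ZMod H) :
    P H j h z ≤ (1/2)^j := by
  rw [P_eq, one_div, inv_pow, div_eq_mul_inv]
  have : (∑ b ∈ Finset.range (2^j), if (2^j * h + (b:ZMod H)) = z then (1:ℝ) else 0) ≤ 1 := by
    rw [Finset.sum_boole]
    have : ((Finset.range (2^j)).filter (fun b : ℕ => 2^j * h + (b:ZMod H) = z)).card ≤ 1 := by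
      rw [Finset.card_le_one]
      intro a ha b hb
      simp only [Finset.mem_filter, Finset.mem_range] at ha hb
      have hle : 2^j ≤ H := hH ▸ Nat.pow_le_pow_right (by norm_num) hj
      exact cast_inj (lt_of_lt_of_le ha.1 hle) (lt_of_lt_of_le hb.1 hle)
        (add_left_cancel (ha.2.trans hb.2.symm))
    exact_mod_cast this
  calc _ ≤ 1 * ((2:ℝ)^j)⁻¹ := by gcongr
    _ = _ := one_mul _

lemma P_eq_d (H d : ℕ) [NeZero H] (hH : H = 2^d) (i : ℕ) : ∀ (h z : ZMod H),
    P H (d + i) h z = 1 / H := by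
  induction i with
  | zero =>
    intro h z
    rw [add_zero, P_eq]
    have h0 : (2^d : ZMod H) = 0 := by
      have := ZMod.natCast_self H
      have h3 : ((2^d : ℕ) : ZMod H) = ((H : ℕ) : ZMod H) := congrArg _ hH.symm
      rw [this] at h3
      exact_mod_cast h3
    have hr : ((2:ℝ)^d) = H := by rw [hH]; push_cast; rfl
    rw [← hH, h0, hr]
    congr 1
    rw [Finset.sum_eq_single z.val]
    · simp
    · intro b hb hne
      rw [if_neg]
      intro h'
      apply hne
      apply cast_inj (Finset.mem_range.1 hb) (ZMod.val_lt z)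
      simpa using h'
    · intro h'; exact absurd (Finset.mem_range.2 (ZMod.val_lt z)) h'
  | succ i ih =>
    intro h z
    rw [← add_assoc]; simp only [P]; rw [ih, ih]; ring

abbrev V (H : ℕ) := ZMod H × ZMod H

def nx (H : ℕ) (x : V H) (b : Bool) : V H := (2 * x.1 + (if b then 1 else 0), x.2 + 1)

noncomputable def S (H : ℕ) (q : ZMod H → ZMod H) : ℕ → V H → ℝ
  | 0, _ => 1
  | i+1, x => ((if (nx H x true).1 = q (nx H x true).2 then 0 else S H q i (nx H x true)) +
      (if (nx H x false).1 = q (nx H x false).2 then 0 else S H q i (nx H x false))) / 2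

noncomputable def G (H : ℕ) (q : ZMod H → ZMod H) : ℕ → V H → ℝ
  | 0, _ => 0
  | i+1, x => (((if (nx H x true).1 = q (nx H x true).2 then 1 else 0) + G H q i (nx H x true)) +
      ((if (nx H x false).1 = q (nx H x false).2 then 1 else 0) + G H q i (nx H x false))) / 2

lemma G_eq (H : ℕ) (q : ZMod H → ZMod H) (i : ℕ) : ∀ x, G H q i x =
    ∑ j ∈ Finset.range i, P H (j+1) x.1 (q (x.2 + (j+1 : ℕ))) := by
  induction i with
  | zero => intro x; simp [G]
  | succ i ih =>
    intro x
    rw [Finset.sum_range_succ']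
    simp only [G, ih]
    have e : ∀ j : ℕ, x.2 + ((j + 1 + 1 : ℕ) : ZMod H) = x.2 + 1 + ((j+1 : ℕ) : ZMod H) := by
      intro j; push_cast; ring
    have : ∑ j ∈ Finset.range i, P H (j+1+1) x.1 (q (x.2 + (j+1+1 : ℕ))) =
        (∑ j ∈ Finset.range i, P H (j+1) (2*x.1+1) (q (x.2 + 1 + (j+1 : ℕ))) +
        ∑ j ∈ Finset.range i, P H (j+1) (2*x.1) (q (x.2 + 1 + (j+1 : ℕ)))) / 2 := by
      rw [← Finset.sum_add_distrib, Finset.sum_div]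
      apply Finset.sum_congr rfl
      intro j _
      rw [e]
      rfl
    rw [this]
    simp [nx, P]
    ring

lemma geo (n : ℕ) : ∑ j ∈ Finset.range n, ((1:ℝ)/2)^(j+1) ≤ 1 := by
  have : ∑ j ∈ Finset.range n, ((1:ℝ)/2)^(j+1) = 1 - (1/2)^n := by
    induction n with
    | zero => simp
    | succ n ih => rw [Finset.sum_range_succ, ih]; ring
  rw [this]
  have : (0:ℝ) ≤ (1/2)^n := by positivity
  linarith

lemma G_le (H d : ℕ) [NeZero H] (hH : H = 2^d) (q : ZMod H → ZMod H) (i : ℕ) (hi : i ≤ H) (x) :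
    G H q i x ≤ 2 := by
  have hpos : (0:ℝ) < H := by exact_mod_cast NeZero.pos H
  rw [G_eq]
  calc _ ≤ ∑ j ∈ Finset.range i, (((1:ℝ)/2)^(j+1) + 1 / H) := by
        apply Finset.sum_le_sum
        intro j _
        rcases le_total (j+1) d with h | h
        · have := P_le H d hH (j+1) h x.1 (q (x.2 + (j+1 : ℕ)))
          have : (0:ℝ) ≤ 1/H := by positivity
          linarith
        · obtain ⟨m, hm⟩ := Nat.exists_eq_add_of_le h
          rw [hm, P_eq_d H d hH]
          have : (0:ℝ) ≤ (1/2)^(d+m) := by positivity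
          linarith
    _ = (∑ j ∈ Finset.range i, ((1:ℝ)/2)^(j+1)) + i / H := by
        rw [Finset.sum_add_distrib]; simp; ring
    _ ≤ 1 + 1 := by
        gcongr
        · exact geo i
        · rw [div_le_one hpos]; exact_mod_cast hi
    _ = 2 := by norm_num

lemma two_d (d : ℕ) : 2 * d ≤ 2^d := by
  induction d with
  | zero => simp
  | succ d ih =>
    rcases Nat.eq_zero_or_pos d with rfl | h
    · simp
    · rw [pow_succ]; omega

lemma G_ge (H d : ℕ) [NeZero H] (hH : H = 2^d) (q : ZMod H → ZMod H) (x) :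
    1/2 ≤ G H q H x := by
  have hpos : (0:ℝ) < H := by exact_mod_cast NeZero.pos H
  have h2 := two_d d
  rw [← hH] at h2
  rw [G_eq]
  obtain ⟨m, hm⟩ : ∃ m, H = d + m := ⟨H - d, by omega⟩
  calc (1/2 : ℝ) ≤ m / H := by
        rw [div_le_div_iff₀ (by norm_num) hpos]
        have : H ≤ 2 * m := by omega
        have : (H:ℝ) ≤ 2 * m := by exact_mod_cast this
        linarith
    _ = ∑ j ∈ Finset.range m, P H (d+j+1) x.1 (q (x.2 + (d+j+1 : ℕ))) := by
        rw [Finset.sum_congr rfl (g := fun _ => (1:ℝ)/H)]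
        · simp; ring
        · intro j _; rw [add_assoc, P_eq_d H d hH]
    _ ≤ ∑ j ∈ Finset.range (d + m), P H (j+1) x.1 (q (x.2 + (j+1 : ℕ))) := by
        rw [Finset.sum_range_add]
        have : 0 ≤ ∑ j ∈ Finset.range d, P H (j+1) x.1 (q (x.2 + (j+1 : ℕ))) :=
          Finset.sum_nonneg (fun _ _ => P_nonneg _ _ _ _)
        linarith
    _ = _ := by rw [← hm]

lemma G_S (H d : ℕ) [NeZero H] (hH : H = 2^d) (q : ZMod H → ZMod H) (i : ℕ) : ∀ (_ : i ≤ H) x,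
    G H q i x ≤ 3 * (1 - S H q i x) := by
  induction i with
  | zero => intro _ x; simp [G, S]
  | succ i ih =>
    intro hi x
    simp only [G, S]
    have a1 := ih (by omega) (nx H x true)
    have a2 := ih (by omega) (nx H x false)
    have b1 := G_le H d hH q i (by omega) (nx H x true)
    have b2 := G_le H d hH q i (by omega) (nx H x false)
    split_ifs <;> linarith

lemma S_le (H d : ℕ) [NeZero H] (hH : H = 2^d) (q : ZMod H → ZMod H) (x) :
    S H q H x ≤ 5/6 := by
  have := G_S H d hH q H le_rfl x
  have := G_ge H d hH q x
  linarith

lemma U_S (H : ℕ) (q : ZMod H → ZMod H) (m : ℕ) (c : ℝ) (hc0 : 0 ≤ c)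
    (hc : ∀ x A, (∀ t, (q t, t) ∈ A) → U (nx H) m x A ≤ c) (i : ℕ) :
    ∀ x A, (∀ t, (q t, t) ∈ A) → U (nx H) (i + m) x A ≤ c * S H q i x := by
  have hS : ∀ i x, 0 ≤ S H q i x := by
    intro i
    induction i with
    | zero => intro x; simp [S]
    | succ i ih =>
      intro x; simp only [S]
      have h1 := ih (nx H x true)
      have h2 := ih (nx H x false)
      split_ifs <;> linarith
  induction i with
  | zero => intro x A hA; simpa [S] using hc x A hA
  | succ i ih =>
    intro x A hA
    have e : i + 1 + m = (i + m) + 1 := by ring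
    rw [e]
    simp only [U, S]
    have key : ∀ b, (if nx H x b ∈ A then 0 else U (nx H) (i+m) (nx H x b) (insert (nx H x b) A))
        ≤ c * (if (nx H x b).1 = q (nx H x b).2 then 0 else S H q i (nx H x b)) := by
      intro b
      by_cases h : nx H x b ∈ A
      · rw [if_pos h]
        apply mul_nonneg hc0
        split_ifs; exacts [le_rfl, hS _ _]
      · rw [if_neg h, if_neg]
        · exact ih _ _ (fun t => Finset.mem_insert_of_mem (hA t))
        · intro h'
          apply h
          have := hA (nx H x b).2
          rwa [← h'] at this
    have k1 := key true
    have k2 := key false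
    linarith

lemma U_full (H d : ℕ) [NeZero H] (hH : H = 2^d) (i j : ℕ) :
    ∀ x A, (∀ t, ∃ h, (h, t) ∈ A) → U (nx H) (j * H + i) x A ≤ (5/6)^j := by
  induction j with
  | zero => intro x A _; simpa using U_le_one _ _ _ _
  | succ j ih =>
    intro x A hA
    choose q hq using hA
    have := U_S H q (j*H+i) ((5/6)^j) (by positivity) (fun x A hA => ih x A (fun t => ⟨_, hA t⟩))
      H x A hq
    have e : (j+1)*H + i = H + (j*H+i) := by ring
    rw [e]
    refine this.trans ?_
    rw [pow_succ]
    gcongr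
    exact S_le H d hH q x

lemma U_init (H : ℕ) (m : ℕ) (c : ℝ) (hc0 : 0 ≤ c)
    (hc : ∀ x A, (∀ t, ∃ h, (h, t) ∈ A) → U (nx H) m x A ≤ c) (i : ℕ) :
    ∀ (x : V H) (A : Finset (V H)), (∀ t : ZMod H, (∃ h, (h, t) ∈ A) ∨ ∃ j : ℕ, j < i ∧ t = x.2 + 1 + j) →
      U (nx H) (i + m) x A ≤ c := by
  induction i with
  | zero => intro x A hA; simpa using hc x A (fun t => by simpa using hA t)
  | succ i ih =>
    intro x A hA
    have e : i + 1 + m = (i + m) + 1 := by ring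
    rw [e]
    simp only [U]
    have key : ∀ b, (if nx H x b ∈ A then 0 else U (nx H) (i+m) (nx H x b) (insert (nx H x b) A))
        ≤ c := by
      intro b
      split_ifs with h
      · exact hc0
      · apply ih
        intro t
        rcases hA t with ⟨h, hh⟩ | ⟨j, hj, rfl⟩
        · exact Or.inl ⟨h, Finset.mem_insert_of_mem hh⟩
        · rcases j with _ | j
          · left
            refine ⟨(nx H x b).1, ?_⟩
            simp [nx]
          · right
            refine ⟨j, by omega, ?_⟩
            simp [nx]; ring
    have k1 := key true
    have k2 := key false
    linarith

lemma U_bound (H d : ℕ) [NeZero H] (hH : H = 2^d) (i j : ℕ) (v : V H) :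
    U (nx H) (j * H + i) v {v} ≤ 6/5 * (5/6)^j := by
  rcases j with _ | j
  · have := U_le_one (nx H) (0 * H + i) v {v}
    norm_num at this ⊢; linarith
  · have e : (j+1)*H + i = H + (j*H+i) := by ring
    rw [e]
    refine (U_init H (j*H+i) ((5/6)^j) (by positivity) (U_full H d hH i j) H v {v} ?_).trans ?_
    · intro t
      right
      refine ⟨(t - v.2 - 1).val, ZMod.val_lt _, ?_⟩
      simp
    · rw [pow_succ]; apply le_of_eq; ring

lemma geo2 (n : ℕ) : ∑ j ∈ Finset.range n, ((5:ℝ)/6)^j ≤ 6 := by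
  have : ∑ j ∈ Finset.range n, ((5:ℝ)/6)^j = 6 - 6*(5/6)^n := by
    induction n with
    | zero => simp
    | succ n ih => rw [Finset.sum_range_succ, ih]; ring
  rw [this]
  have : (0:ℝ) ≤ (5/6)^n := by positivity
  linarith

lemma sum_U (H d : ℕ) [NeZero H] (hH : H = 2^d) (v : V H) (m : ℕ) :
    ∑ k ∈ Finset.range (m * H), U (nx H) k v {v} ≤
      H * (6/5) * ∑ j ∈ Finset.range m, ((5:ℝ)/6)^j := by
  induction m with
  | zero => simp
  | succ m ih =>
    rw [add_mul, one_mul, Finset.sum_range_add, Finset.sum_range_succ _ m, mul_add]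
    have : ∑ i ∈ Finset.range H, U (nx H) (m*H+i) v {v} ≤ ∑ i ∈ Finset.range H, (6/5 * (5/6)^m : ℝ) :=
      Finset.sum_le_sum (fun i _ => U_bound H d hH i m v)
    simp at this
    linarith

end walk
end BF

/-- In the nonmonotone ensemble on `Ω_{H,W}` with `W = H`
(`H = 2^d`), a particle started at a uniformly random vertex follows the unique
outgoing edges until it revisits a vertex; the set of distinct vertices visited
is exactly the forward orbit of the starting vertex.  There is a universal
constant `C` such that the expected number of distinct vertices visited is at
most `C·H`. -/
theorem statement11 :
    ∃ C > (0 : ℝ), ∀ d H : ℕ, H = 2 ^ d → ∀ _ : NeZero H,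
      (∑ β : ZMod H × ZMod H → Bool, ∑ v : ZMod H × ZMod H,
          (Nat.card {u : ZMod H × ZMod H // ∃ j, (bstep H H β)^[j] v = u} : ℝ))
          / (2 ^ (H * H) * ((H : ℝ) * H))
        ≤ C * H := by
  refine ⟨8, by norm_num, ?_⟩
  intro d H hH _
  have hpos : (0:ℝ) < H := by exact_mod_cast NeZero.pos H
  have hcard : Fintype.card (ZMod H × ZMod H) = H * H := by
    rw [Fintype.card_prod, ZMod.card]
  rw [div_le_iff₀ (by positivity), Finset.sum_comm]
  have key : ∀ v : ZMod H × ZMod H, ∑ β : ZMod H × ZMod H → Bool,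
      (Nat.card {u : ZMod H × ZMod H // ∃ j, (bstep H H β)^[j] v = u} : ℝ)
      ≤ 2 ^ (H*H) * (8 * H) := by
    intro v
    calc _ ≤ ∑ β : ZMod H × ZMod H → Bool, ∑ k ∈ Finset.range (H*H),
          BF.Ind (BF.nx H) k β v {v} := by
          apply Finset.sum_le_sum
          intro β _
          have := BF.card_orbit_le (BF.nx H) β v
          rw [hcard] at this
          exact this
      _ = ∑ k ∈ Finset.range (H*H), 2^(H*H) * BF.U (BF.nx H) k v {v} := by
          rw [Finset.sum_comm]
          apply Finset.sum_congr rfl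
          intro k _
          rw [BF.sum_Ind _ _ _ _ (by simp), hcard]
      _ ≤ _ := by
          rw [← Finset.mul_sum]
          gcongr
          refine (BF.sum_U H d hH v H).trans ?_
          have := BF.geo2 H
          calc (H:ℝ) * (6/5) * _ ≤ H * (6/5) * 6 := by gcongr
            _ ≤ _ := by linarith
  calc _ ≤ ∑ v : ZMod H × ZMod H, (2 ^ (H*H) * (8 * H) : ℝ) :=
        Finset.sum_le_sum (fun v _ => key v)
    _ = _ := by
        rw [Finset.sum_const, Finset.card_univ, hcard]
        simp only [nsmul_eq_mul]; push_cast; ring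
end

section
/- In the nonmonotone ensemble on the wrapped extended butterfly Ω_{H,W} with W = H (H = 2^d), pick a uniformly random time slice t₀ and then m vertices chosen independently and uniformly at random from slice t₀; from each chosen vertex, follow the unique outgoing edges of the random subgraph forward until the path revisits a previously visited vertex (hence enters a directed cycle). There is a universal constant C such that the expected number of directed cycles of the random subgraph containing no vertex visited by any of these m paths is at most C/(m+1). -/
namespace BF
open Finset Function

noncomputable def av {α : Type*} [Fintype α] (f : α → ℝ) : ℝ := (∑ a, f a) / (Fintype.card α : ℝ)

theorem av_mono {α : Type*} [Fintype α] {f g : α → ℝ} (h : ∀ a, f a ≤ g a) : av f ≤ av g := by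
  unfold av
  gcongr
  exact h _

theorem av_const {α : Type*} [Fintype α] [Nonempty α] (c : ℝ) : av (fun _ : α => c) = c := by
  unfold av
  have : (Fintype.card α : ℝ) ≠ 0 := by exact_mod_cast Fintype.card_ne_zero
  simp only [sum_const, card_univ, nsmul_eq_mul]
  field_simp

theorem av_add {α : Type*} [Fintype α] (f g : α → ℝ) : av (fun a => f a + g a) = av f + av g := by
  unfold av; rw [sum_add_distrib, add_div]

theorem av_mul {α : Type*} [Fintype α] (c : ℝ) (f : α → ℝ) : av (fun a => c * f a) = c * av f := by
  unfold av; rw [← mul_sum, mul_div_assoc]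

theorem av_sum {α ι : Type*} [Fintype α] (s : Finset ι) (f : ι → α → ℝ) :
    av (fun a => ∑ i ∈ s, f i a) = ∑ i ∈ s, av (f i) := by
  unfold av; rw [sum_comm, sum_div]

theorem av_equiv {α β : Type*} [Fintype α] [Fintype β] (e : α ≃ β) (f : β → ℝ) :
    av (fun a => f (e a)) = av f := by
  unfold av; rw [Fintype.card_congr e, e.sum_comp]

theorem av_prod {α β : Type*} [Fintype α] [Fintype β] (f : α × β → ℝ) :
    av f = av (fun a => av (fun b => f (a, b))) := by
  unfold av
  rw [Fintype.sum_prod_type, ← sum_div, Fintype.card_prod, div_div]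
  push_cast
  rw [mul_comm]

theorem av_nonneg {α : Type*} [Fintype α] {f : α → ℝ} (h : ∀ a, 0 ≤ f a) : 0 ≤ av f :=
  div_nonneg (sum_nonneg fun a _ => h a) (by positivity)

theorem av_comm {α β : Type*} [Fintype α] [Fintype β] (f : α → β → ℝ) :
    av (fun a => av (fun b => f a b)) = av (fun b => av (fun a => f a b)) := by
  rw [← av_prod (fun p : α × β => f p.1 p.2), ← av_prod (fun p : β × α => f p.2 p.1),
    ← av_equiv (Equiv.prodComm β α)]
  rfl

theorem av_cons {G : Type*} [Fintype G] {k : ℕ} (f : (Fin (k+1) → G) → ℝ) :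
    av f = av (fun c => av (fun b : Fin k → G => f (Fin.cons c b))) := by
  rw [← av_prod (fun p : G × (Fin k → G) => f (Fin.cons p.1 p.2)),
    ← av_equiv (Fin.consEquiv (fun _ => G))]
  rfl

/-- restriction along an injective map -/
theorem av_restrict {Z G : Type*} [Fintype Z] [DecidableEq Z] [Fintype G] [Nonempty G]
    {k : ℕ} (x : Fin k → Z) (hx : Injective x)
    (f : (Fin k → G) → ℝ) : av (fun ω : Z → G => f (ω ∘ x)) = av f := by
  classical
  let e : Fin k ⊕ ((Set.range x)ᶜ : Set Z) ≃ Z :=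
    (Equiv.sumCongr (Equiv.ofInjective x hx) (Equiv.refl _)).trans (Equiv.Set.sumCompl _)
  let E : (Z → G) ≃ (Fin k → G) × (((Set.range x)ᶜ : Set Z) → G) :=
    (Equiv.arrowCongr e.symm (Equiv.refl _)).trans (Equiv.sumArrowEquivProdArrow _ _ _)
  have h1 := av_equiv E (fun p => f p.1)
  rw [av_prod] at h1
  simp only [av_const] at h1
  rw [← h1]
  rfl

/-! second moment -/
section sm
variable {G : Type*} [Fintype G] [Nonempty G] (R : G → G → ℝ) 

noncomputable def Dg (c : G) (k : ℕ) (b : Fin k → G) : ℝ := ∑ i, R c (b i)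

noncomputable def Yk : (k : ℕ) → (Fin k → G) → ℝ
  | 0, _ => 0
  | k+1, b => Yk k (Fin.tail b) + Dg R (b 0) k (Fin.tail b)

variable (p : ℝ) (h1 : ∀ a, av (fun b => R a b) = p) (h2 : ∀ b, av (fun a => R a b) = p)
  (h3 : ∀ a b, R a b * R a b = R a b)
include h1

theorem av_Dg (c : G) (k : ℕ) : av (fun b => Dg R c k b) = k * p := by
  induction k with
  | zero => simp [Dg, av]
  | succ k ih =>
    rw [av_cons]
    have : ∀ a (b : Fin k → G), Dg R c (k+1) (Fin.cons a b) = R c a + Dg R c k b := by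
      intro a b; simp [Dg, Fin.sum_univ_succ]
    simp only [this, av_add, av_const, h1, ih]
    push_cast; ring

include h3 in
theorem av_Dg2 (c : G) (k : ℕ) : av (fun b => Dg R c k b ^ 2) = k * p * (1 - p) + (k * p)^2 := by
  induction k with
  | zero => simp [Dg, av]
  | succ k ih =>
    rw [av_cons]
    have : ∀ a (b : Fin k → G), Dg R c (k+1) (Fin.cons a b) ^ 2
        = R c a + (2 * R c a) * Dg R c k b + Dg R c k b ^ 2 := by
      intro a b; simp only [Dg, Fin.sum_univ_succ, Fin.cons_zero, Fin.cons_succ]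
      linear_combination h3 c a
    simp only [this, av_add, av_mul, av_const, h1, ih, av_Dg R p h1 c k]
    have : av (fun a => 2 * R c a * (k * p)) = 2 * (k * p) * p := by
      have e : ∀ a, 2 * R c a * (k * p) = (2 * (k * p)) * R c a := by intro a; ring
      simp only [e, av_mul, h1]
    rw [this]
    push_cast; ring

theorem av_Yk (k : ℕ) : av (Yk R k) = k * (k - 1) / 2 * p := by
  induction k with
  | zero => simp [Yk, av]
  | succ k ih =>
    rw [av_cons]
    simp only [Yk, Fin.tail_cons, Fin.cons_zero, av_add, av_const, av_Dg R p h1]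
    have : av (fun b => Yk R k b) = av (Yk R k) := rfl
    rw [this, ih]
    push_cast; ring

include h2 h3 in
theorem av_Yk2 (k : ℕ) : av (fun b => Yk R k b ^ 2) =
    k * (k - 1) / 2 * p * (1 - p) + (k * (k - 1) / 2 * p)^2 := by
  induction k with
  | zero => simp [Yk, av]
  | succ k ih =>
    rw [av_cons]
    have e : ∀ a (b : Fin k → G), Yk R (k+1) (Fin.cons a b) ^ 2
        = Yk R k b ^ 2 + (2 * Yk R k b) * Dg R a k b + Dg R a k b ^ 2 := by
      intro a b; simp only [Yk, Fin.tail_cons, Fin.cons_zero]; ring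
    have e2 : av (fun a => av (fun b => (2 * Yk R k b) * Dg R a k b))
        = 2 * (k * (k - 1) / 2 * p) * (k * p) := by
      rw [av_comm]
      have e3 : ∀ b : Fin k → G, av (fun a => Dg R a k b) = k * p := by
        intro b
        simp only [Dg]
        rw [av_sum]
        simp [h2]
      simp only [av_mul, e3]
      rw [← av_Yk R p h1 k]
      have : ∀ b : Fin k → G, 2 * Yk R k b * (k * p) = 2 * (k * p) * Yk R k b := by intro b; ring
      simp only [this, av_mul]
      have : av (fun b => Yk R k b) = av (Yk R k) := rfl
      rw [this]; ring
    simp only [e, av_add, av_const, ih, av_Dg2 R p h1 h3, e2]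
    push_cast; ring

omit [Fintype G] [Nonempty G] h1 in
theorem Yk_ne (k : ℕ) (b : Fin k → G) (h : Yk R k b ≠ 0) : ∃ i j, i ≠ j ∧ R (b i) (b j) ≠ 0 := by
  induction k with
  | zero => simp [Yk] at h
  | succ k ih =>
    by_cases h0 : Yk R k (Fin.tail b) = 0
    · have hd : Dg R (b 0) k (Fin.tail b) ≠ 0 := by
        intro h'; apply h; simp [Yk, h0, h']
      obtain ⟨i, -, hi⟩ := exists_ne_zero_of_sum_ne_zero hd
      exact ⟨0, i.succ, (Fin.succ_ne_zero i).symm, hi⟩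
    · obtain ⟨i, j, hij, hR⟩ := ih _ h0
      exact ⟨i.succ, j.succ, fun h => hij (Fin.succ_injective _ h), hR⟩

include h2 h3 in
open Classical in
theorem second_moment (k : ℕ) (hp : 0 ≤ p) :
    av (fun b : Fin k → G => if (∀ i j, i ≠ j → R (b i) (b j) = 0) then (1:ℝ) else 0) ≤
      1 / (1 + k * (k - 1) / 2 * p) := by
  set μ : ℝ := k * (k - 1) / 2 * p with hμ
  have hμ0 : 0 ≤ μ := by
    have : (0:ℝ) ≤ k * (k - 1) := by
      rcases k with _ | k
      · simp
      · push_cast; simp; positivity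
    positivity
  have hN : (0:ℝ) < Fintype.card (Fin k → G) := by exact_mod_cast Fintype.card_pos
  have a1 := av_Yk R p h1 k
  have a2 := av_Yk2 R p h1 h2 h3 k
  rw [← hμ] at a1 a2
  set Q := av (fun b : Fin k → G => if Yk R k b = 0 then (0:ℝ) else 1) with hQ
  have cs : μ ^ 2 ≤ Q * (μ * (1 - p) + μ ^ 2) := by
    rw [← a1, ← a1] at *
    rw [← a2, hQ]
    unfold av
    rw [div_pow, div_mul_div_comm, ← sq]
    gcongr
    have := Finset.sum_mul_sq_le_sq_mul_sq univ
      (fun b : Fin k → G => if Yk R k b = 0 then (0:ℝ) else 1) (Yk R k)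
    convert this using 1
    · congr 1; apply sum_congr rfl; intro b _; split_ifs with h <;> simp [h]
    · congr 1; apply sum_congr rfl; intro b _; split_ifs with h <;> simp [h]
  have hQ0 : 0 ≤ Q := av_nonneg fun b => by positivity
  have le : av (fun b : Fin k → G => if (∀ i j, i ≠ j → R (b i) (b j) = 0) then (1:ℝ) else 0) ≤ 1 - Q := by
    have : av (fun b : Fin k → G => (1:ℝ) + (-1) * (if Yk R k b = 0 then (0:ℝ) else 1)) = 1 - Q := by
      rw [av_add, av_mul, av_const]; ring
    rw [← this]
    apply av_mono
    intro b
    by_cases hY : Yk R k b = 0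
    · simp only [hY]; split_ifs <;> norm_num
    · obtain ⟨i, j, hij, hR⟩ := Yk_ne R k b hY
      have : ¬ ∀ i j, i ≠ j → R (b i) (b j) = 0 := fun h => hR (h i j hij)
      simp [this, hY]
  refine le.trans ?_
  rw [le_div_iff₀ (by positivity)]
  rcases hμ0.eq_or_lt with h | h
  · rw [← h]; linarith
  · have : μ ≤ Q * (1 + μ) := by
      have : μ * μ ≤ μ * (Q * (1 + μ)) := by nlinarith [mul_nonneg (mul_nonneg hQ0 hμ0) hp]
      exact le_of_mul_le_mul_left this h
    nlinarith
end sm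
end BF

namespace BF
open Finset Function

section ee
variable {H : ℕ} [NeZero H]

def bt (b : Bool) : ZMod H := if b then 1 else 0

def stp (ω : ZMod H → Bool) (h : ZMod H) : ZMod H := 2 * h + bt (ω h)

noncomputable def EE : ℕ → ((ZMod H → ZMod H) → ℝ) → ℝ
  | 0, Φ => Φ id
  | n+1, Φ => av (fun ω : ZMod H → Bool => EE n (fun g => Φ (g ∘ stp ω)))

theorem EE_mono (n : ℕ) {Φ Ψ : (ZMod H → ZMod H) → ℝ} (h : ∀ g, Φ g ≤ Ψ g) : EE n Φ ≤ EE n Ψ := by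
  induction n generalizing Φ Ψ with
  | zero => exact h _
  | succ n ih => exact av_mono fun ω => ih fun g => h _

theorem EE_const (n : ℕ) (c : ℝ) : EE (H := H) n (fun _ => c) = c := by
  induction n with
  | zero => rfl
  | succ n ih => simp only [EE, ih, av_const]

theorem EE_add (n : ℕ) (Φ Ψ : (ZMod H → ZMod H) → ℝ) :
    EE n (fun g => Φ g + Ψ g) = EE n Φ + EE n Ψ := by
  induction n generalizing Φ Ψ with
  | zero => rfl
  | succ n ih => simp only [EE, ih, av_add]

theorem EE_mul (n : ℕ) (c : ℝ) (Φ : (ZMod H → ZMod H) → ℝ) :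
    EE n (fun g => c * Φ g) = c * EE n Φ := by
  induction n generalizing Φ with
  | zero => rfl
  | succ n ih => simp only [EE, ih, av_mul]

theorem EE_sum {ι : Type*} (s : Finset ι) (n : ℕ) (Φ : ι → (ZMod H → ZMod H) → ℝ) :
    EE n (fun g => ∑ i ∈ s, Φ i g) = ∑ i ∈ s, EE n (Φ i) := by
  induction n generalizing Φ with
  | zero => rfl
  | succ n ih => simp only [EE, ih, av_sum]

theorem EE_comp (a b : ℕ) (Φ : (ZMod H → ZMod H) → ℝ) :
    EE (a + b) Φ = EE a (fun g1 => EE b (fun g2 => Φ (g2 ∘ g1))) := by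
  induction a generalizing Φ with
  | zero => simp [EE]
  | succ a ih =>
    rw [Nat.succ_add]
    simp only [EE, ih]
    rfl

/-- vector of independent walkers -/
def PS {k : ℕ} (B : ℕ → Fin k → Bool) (x : Fin k → ZMod H) : ℕ → Fin k → ZMod H
  | 0 => x
  | t+1 => fun i => 2 * PS B x t i + bt (B t i)

def ext {k n : ℕ} (b : Fin n → Fin k → Bool) (t : ℕ) : Fin k → Bool :=
  if h : t < n then b ⟨t, h⟩ else fun _ => false

omit [NeZero H] in
theorem PS_shift {k : ℕ} (B : ℕ → Fin k → Bool) (x : Fin k → ZMod H) (t : ℕ) :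
    PS B x (t + 1) = PS (fun s => B (s+1)) (fun i => 2 * x i + bt (B 0 i)) t := by
  induction t with
  | zero => rfl
  | succ t ih => rw [PS, ih]; rfl

theorem ext_cons {k n : ℕ} (c : Fin k → Bool) (b : Fin n → Fin k → Bool) :
    (fun s => ext (Fin.cons c b : Fin (n+1) → Fin k → Bool) (s+1)) = ext b := by
  funext s
  unfold ext
  by_cases h : s < n
  · have h' : s + 1 < n + 1 := by omega
    simp only [h, h', dif_pos]
    exact Fin.cons_succ (α := fun _ => Fin k → Bool) c b ⟨s, h⟩
  · have h' : ¬ s + 1 < n + 1 := by omega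
    simp only [h, h', dif_neg, not_false_eq_true]

theorem ext_cons0 {k n : ℕ} (c : Fin k → Bool) (b : Fin n → Fin k → Bool) :
    ext (Fin.cons c b : Fin (n+1) → Fin k → Bool) 0 = c := by
  simp [ext]

open Classical in
theorem EE_le_walk {k : ℕ} (n : ℕ) (x : Fin k → ZMod H) (f : (Fin k → ZMod H) → ℝ)
    (hf : ∀ y, 0 ≤ f y) :
    EE n (fun g => if Injective (g ∘ x) then f (g ∘ x) else 0) ≤
      av (fun b : Fin n → Fin k → Bool =>
        if ∀ t ≤ n, Injective (PS (ext b) x t) then f (PS (ext b) x n) else 0) := by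
  induction n generalizing x with
  | zero =>
    simp only [EE, nonpos_iff_eq_zero, forall_eq, PS, Function.id_comp]
    rw [av_const]
  | succ n ih =>
    by_cases hx : Injective x
    · rw [av_cons]
      have key := av_restrict (G := Bool) x hx (fun c => av (fun b : Fin n → Fin k → Bool =>
        if ∀ t ≤ n, Injective (PS (ext b) (fun i => 2 * x i + bt (c i)) t) then
          f (PS (ext b) (fun i => 2 * x i + bt (c i)) n) else 0))
      have : ∀ (c : Fin k → Bool) (b : Fin n → Fin k → Bool),
        (if ∀ t ≤ n + 1, Injective (PS (ext (Fin.cons c b : Fin (n+1) → Fin k → Bool)) x t) then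
          f (PS (ext (Fin.cons c b : Fin (n+1) → Fin k → Bool)) x (n+1)) else 0) =
        (if ∀ t ≤ n, Injective (PS (ext b) (fun i => 2 * x i + bt (c i)) t) then
          f (PS (ext b) (fun i => 2 * x i + bt (c i)) n) else 0) := by
        intro c b
        have e : ∀ t, PS (ext (Fin.cons c b : Fin (n+1) → Fin k → Bool)) x (t+1) =
          PS (ext b) (fun i => 2 * x i + bt (c i)) t := by
          intro t
          rw [PS_shift, ext_cons, ext_cons0]
        rw [e]
        congr 1
        apply propext
        constructor
        · intro h t ht
          rw [← e]; exact h _ (by omega)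
        · intro h t ht
          rcases t with _ | t
          · exact hx
          · rw [e]; exact h _ (by omega)
      simp only [this]
      rw [← key]
      apply av_mono
      intro ω
      exact ih (stp ω ∘ x)
    · have h0 : ∀ g : ZMod H → ZMod H, ¬ Injective (g ∘ x) := fun g h => hx (Injective.of_comp h)
      simp only [h0, if_false]
      rw [EE_const]
      apply av_nonneg
      intro b
      split_ifs <;> simp [hf]

omit [NeZero H] in
theorem PS_agree {k : ℕ} (B : ℕ → Fin k → Bool) (x : Fin k → ZMod H) (i j : Fin k) (t : ℕ) (n : ℕ)
    (h : ∀ s < n, B (t + s) i = B (t + s) j) :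
    PS B x (t + n) i - PS B x (t + n) j = 2 ^ n * (PS B x t i - PS B x t j) := by
  induction n with
  | zero => simp
  | succ n ih =>
    rw [← add_assoc]
    simp only [PS]
    rw [h n (by omega), pow_succ]
    linear_combination 2 * ih (fun s hs => h s (by omega))

def psN (B : ℕ → Bool) : ℕ → ℕ
  | 0 => 0
  | t+1 => 2 * psN B t + (if B t then 1 else 0)

theorem psN_lt (B : ℕ → Bool) (t : ℕ) : psN B t < 2 ^ t := by
  induction t with
  | zero => simp [psN]
  | succ t ih => rw [psN, pow_succ]; split_ifs <;> omega

theorem psN_inj (A B : ℕ → Bool) (t : ℕ) (h : psN A t = psN B t) : ∀ s < t, A s = B s := by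
  induction t with
  | zero => intro s hs; omega
  | succ t ih =>
    rw [psN, psN] at h
    intro s hs
    have h1 : psN A t = psN B t := by split_ifs at h <;> omega
    rcases Nat.lt_succ_iff_lt_or_eq.1 hs with h' | rfl
    · exact ih h1 s h'
    · cases hA : A s <;> cases hB : B s <;> simp [hA, hB] at h ⊢ <;> omega

omit [NeZero H] in
theorem PS_psN {k : ℕ} (B : ℕ → Fin k → Bool) (x : Fin k → ZMod H) (t : ℕ) (i : Fin k) :
    PS B x t i = 2 ^ t * x i + (psN (fun s => B s i) t : ℕ) := by
  induction t with
  | zero => simp [PS, psN]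
  | succ t ih => simp only [PS, psN, bt]; rw [ih]; push_cast; split_ifs <;> ring

omit [NeZero H] in
theorem two_pow_zero {d : ℕ} (hH : H = 2 ^ d) : (2 : ZMod H) ^ d = 0 := by
  have := ZMod.natCast_self H
  rw [hH] at this ⊢
  exact_mod_cast this

omit [NeZero H] in
theorem PS_end_inj {d : ℕ} (hH : H = 2 ^ d) {k : ℕ} (x : Fin k → ZMod H) (a b : Fin d → Fin k → Bool)
    (h : PS (ext a) x d = PS (ext b) x d) : a = b := by
  funext t i
  have h1 := congrFun h i
  rw [PS_psN, PS_psN] at h1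
  have h2 := add_left_cancel h1
  rw [ZMod.natCast_eq_natCast_iff'] at h2
  rw [Nat.mod_eq_of_lt (by rw [hH]; exact psN_lt _ _), Nat.mod_eq_of_lt (by rw [hH]; exact psN_lt _ _)] at h2
  have := psN_inj _ _ _ h2 t t.2
  simpa [ext] using this

open Classical in
/-- step (c) -/
theorem hit_bound {d : ℕ} (hH : H = 2 ^ d) {k : ℕ} (x y : Fin k → ZMod H) (hy : Injective y) :
    EE d (fun g => if g ∘ x = y then (1:ℝ) else 0) ≤ 1 / (H:ℝ) ^ k := by
  have h1 := EE_le_walk d x (fun z => if z = y then (1:ℝ) else 0) (fun z => by positivity)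
  have h2 : ∀ g : ZMod H → ZMod H, (if g ∘ x = y then (1:ℝ) else 0) ≤
      if Injective (g ∘ x) then (if g ∘ x = y then (1:ℝ) else 0) else 0 := by
    intro g
    by_cases h : g ∘ x = y
    · have : Injective (g ∘ x) := h ▸ hy
      simp [h, hy]
    · simp [h]
  refine (EE_mono d h2).trans (h1.trans ?_)
  have h3 : av (fun b : Fin d → Fin k → Bool =>
        if ∀ t ≤ d, Injective (PS (ext b) x t) then (if PS (ext b) x d = y then (1:ℝ) else 0) else 0)
      ≤ av (fun b : Fin d → Fin k → Bool => if PS (ext b) x d = y then (1:ℝ) else 0) := by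
    apply av_mono
    intro b
    split_ifs <;> simp
  refine h3.trans ?_
  unfold av
  have hc : (Fintype.card (Fin d → Fin k → Bool) : ℝ) = (H:ℝ)^k := by
    simp [hH, ← pow_mul, mul_comm]
  rw [hc]
  gcongr
  rw [Finset.sum_boole]
  norm_cast
  rw [Finset.card_le_one]
  intro a ha b hb
  simp only [mem_filter, mem_univ, true_and] at ha hb
  exact PS_end_inj hH x a b (ha.trans hb.symm)

end ee
end BF

namespace BF
open Finset Function

section win
variable {H : ℕ} [NeZero H] 

def PP {d : ℕ} (s : Fin d) (a b : Fin (2*d) → Bool) : Prop :=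
  a ⟨s, by omega⟩ ≠ b ⟨s, by omega⟩ ∧ ∀ t : Fin (2*d), (s:ℕ) < t → (t:ℕ) ≤ s + d → a t = b t

open Classical in
noncomputable def RR {d : ℕ} (a b : Fin (2*d) → Bool) : ℝ := if ∃ s, PP s a b then 1 else 0

theorem PP_symm {d : ℕ} (s : Fin d) (a b : Fin (2*d) → Bool) : PP s a b ↔ PP s b a := by
  unfold PP
  constructor <;> rintro ⟨h1, h2⟩ <;> exact ⟨h1.symm, fun t ht ht' => (h2 t ht ht').symm⟩

theorem PP_unique {d : ℕ} (s s' : Fin d) (a b : Fin (2*d) → Bool) (h : PP s a b) (h' : PP s' a b) :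
    s = s' := by
  rcases lt_trichotomy s s' with hl | he | hl
  · exact absurd (h.2 ⟨s', by omega⟩ hl (by simp; omega)) h'.1
  · exact he
  · exact absurd (h'.2 ⟨s, by omega⟩ hl (by simp; omega)) h.1

open Classical in
theorem RR_sum {d : ℕ} (a b : Fin (2*d) → Bool) :
    RR a b = ∑ s : Fin d, if PP s a b then (1:ℝ) else 0 := by
  unfold RR
  by_cases h : ∃ s, PP s a b
  · obtain ⟨s, hs⟩ := h
    rw [if_pos ⟨s, hs⟩, Finset.sum_eq_single s]
    · simp [hs]
    · intro s' _ hne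
      rw [if_neg]
      intro h'
      exact hne (PP_unique _ _ _ _ h' hs)
    · simp
  · rw [if_neg h]
    push Not at h
    simp [h]

open Classical in
theorem PP_av {d : ℕ} (s : Fin d) (a : Fin (2*d) → Bool) :
    av (fun b => if PP s a b then (1:ℝ) else 0) = 1 / 2 ^ (d+1) := by
  have hs2 : (s:ℕ) + d < 2 * d := by omega
  let I : Finset (Fin (2*d)) := Finset.Icc ⟨s, by omega⟩ ⟨s + d, hs2⟩
  have hI : I.card = d + 1 := by
    rw [Fin.card_Icc]; simp; omega
  let T : Fin (2*d) → Finset Bool := fun t =>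
    if (t:ℕ) = s then {!(a t)} else if t ∈ I then {a t} else univ
  have hfil : (univ.filter fun b => PP s a b) = Fintype.piFinset T := by
    ext b
    simp only [mem_filter, mem_univ, true_and, Fintype.mem_piFinset]
    constructor
    · rintro ⟨h1, h2⟩ t
      by_cases ht : (t:ℕ) = s
      · have hs1 : (s:ℕ) < 2 * d := Nat.lt_of_le_of_lt (Nat.le_add_right _ _) hs2
        have : t = ⟨s, hs1⟩ := Fin.ext ht
        subst this
        simp only [T, if_true, mem_singleton]
        revert h1
        generalize a _ = p
        generalize b _ = q
        revert p q; decide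
      · by_cases ht2 : t ∈ I
        · simp only [T, ht, ht2, if_false, if_true, mem_singleton]
          simp only [I, Finset.mem_Icc, Fin.le_def] at ht2
          exact (h2 t (by omega) ht2.2).symm
        · simp [T, ht, ht2]
    · intro h
      constructor
      · have := h ⟨s, by omega⟩
        simp only [T, if_true, mem_singleton] at this
        rw [this]
        generalize a _ = p
        revert p; decide
      · intro t ht ht'
        have h2 := h t
        have ht2 : t ∈ I := by
          simp only [I, Finset.mem_Icc, Fin.le_def]; omega
        have ht3 : ¬ (t:ℕ) = s := by omega
        simp only [T, ht3, ht2, if_false, if_true, mem_singleton] at h2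
        exact h2.symm
  have hprod : (∏ t, (T t).card) * 2 ^ (d+1) = 2 ^ (2*d) := by
    have e1 : (2:ℕ) ^ (d+1) = ∏ t : Fin (2*d), if t ∈ I then 2 else 1 := by
      rw [Finset.prod_ite_mem, univ_inter, prod_const, hI]
    have e2 : (2:ℕ) ^ (2*d) = ∏ t : Fin (2*d), 2 := by simp
    rw [e1, e2, ← prod_mul_distrib]
    apply prod_congr rfl
    intro t _
    by_cases ht : (t:ℕ) = s
    · have ht2 : t ∈ I := by
        simp only [I, Finset.mem_Icc, Fin.le_def]; omega
      simp [T, ht, ht2]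
    · by_cases ht2 : t ∈ I <;> simp [T, ht, ht2]
  unfold av
  rw [Finset.sum_boole, hfil, Fintype.card_piFinset]
  have hc : (Fintype.card (Fin (2*d) → Bool) : ℝ) = 2 ^ (2*d) := by simp
  rw [hc, div_eq_div_iff (by positivity) (by positivity), one_mul]
  exact_mod_cast hprod

theorem RR_av {d : ℕ} (a : Fin (2*d) → Bool) : av (fun b => RR a b) = d / 2 ^ (d+1) := by
  classical
  simp only [RR_sum]
  rw [av_sum]
  simp only [PP_av]
  simp [div_eq_mul_inv]

theorem RR_av' {d : ℕ} (b : Fin (2*d) → Bool) : av (fun a => RR a b) = d / 2 ^ (d+1) := by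
  rw [← RR_av b]
  congr 1
  funext a
  have : (∃ s, PP s a b) ↔ ∃ s, PP s b a := exists_congr fun s => PP_symm s a b
  unfold RR
  by_cases h : ∃ s, PP s a b
  · rw [if_pos h, if_pos (this.1 h)]
  · rw [if_neg h, if_neg (fun h' => h (this.2 h'))]

noncomputable def mu (H d k : ℕ) : ℝ := k * (k - 1) / 2 * (d / (2 * H))

theorem mu_nonneg (H d k : ℕ) : 0 ≤ mu H d k := by
  have : (0:ℝ) ≤ k * (k - 1) := by
    rcases k with _ | k
    · simp
    · push_cast; simp; positivity
  unfold mu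
  positivity

open Classical in
theorem window {d : ℕ} (hH : H = 2 ^ d) {k : ℕ} (x : Fin k → ZMod H) :
    EE (2*d) (fun g => if Injective (g ∘ x) then (1:ℝ) else 0) ≤ 1 / (1 + mu H d k) := by
  have h1 := EE_le_walk (2*d) x (fun _ => (1:ℝ)) (fun _ => by norm_num)
  refine h1.trans ?_
  have h2 := second_moment (G := Fin (2*d) → Bool) RR (d / 2^(d+1)) RR_av RR_av'
    (by intro a b; unfold RR; split_ifs <;> simp) k (by positivity)
  have hm : (k:ℝ) * (k - 1) / 2 * (d / 2^(d+1)) = mu H d k := by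
    unfold mu; rw [hH, pow_succ]; push_cast; rw [mul_comm (2^d : ℝ) 2]
  rw [hm] at h2
  refine le_trans ?_ h2
  rw [← av_equiv (Equiv.piComm (fun (_ : Fin (2*d)) (_ : Fin k) => Bool))]
  apply av_mono
  intro b
  split_ifs with ha hb hb
  · exact le_rfl
  · exfalso
    apply hb
    intro i j hij
    unfold RR
    rw [if_neg]
    rintro ⟨s, -, hs⟩
    apply hij
    apply ha (s + 1 + d) (by omega)
    have := PS_agree (ext b) x i j (s+1) d ?_
    · rw [two_pow_zero hH, zero_mul, sub_eq_zero] at this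
      exact this
    · intro r hr
      have hlt : (s:ℕ) + 1 + r < 2 * d := by omega
      have := hs ⟨s + 1 + r, hlt⟩ (by simp; omega) (by simp; omega)
      simpa [ext, hlt] using this
  · norm_num
  · exact le_rfl

open Classical in
theorem windows {d : ℕ} (hH : H = 2 ^ d) {k : ℕ} (x : Fin k → ZMod H) (J : ℕ) :
    EE (2*d*J) (fun g => if Injective (g ∘ x) then (1:ℝ) else 0) ≤ (1 / (1 + mu H d k)) ^ J := by
  have hmu := mu_nonneg H d k
  induction J with
  | zero =>
    simp only [Nat.mul_zero, EE, pow_zero]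
    split_ifs <;> norm_num
  | succ J ih =>
    rw [Nat.mul_succ, EE_comp, pow_succ']
    refine le_trans ?_ (mul_le_mul_of_nonneg_left ih (by positivity))
    rw [← EE_mul]
    apply EE_mono
    intro g1
    by_cases hi : Injective (g1 ∘ x)
    · rw [if_pos hi, mul_one]
      exact window hH (g1 ∘ x)
    · rw [if_neg hi, mul_zero]
      have : ∀ g2 : ZMod H → ZMod H, ¬ Injective ((g2 ∘ g1) ∘ x) := fun g2 h =>
        hi (Injective.of_comp (f := g2) h)
      simp only [this, if_false]
      rw [EE_const]

end win
end BF

namespace BF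
open Finset Function

section loss
variable {H : ℕ} [NeZero H] 

noncomputable def el (H d k : ℕ) : ℝ := mu H d k / (1 + mu H d k)

theorem el_nonneg (H d k : ℕ) : 0 ≤ el H d k := by
  have := mu_nonneg H d k
  unfold el; positivity

theorem card_one_group {d : ℕ} (hH : H = 2 ^ d) (A : Finset (ZMod H)) :
    EE (2*d) (fun g => ((A.image g).card : ℝ)) ≤ A.card - el H d A.card := by
  classical
  set k := A.card with hk
  let x : Fin k → ZMod H := fun i => (A.equivFin.symm i : ZMod H)
  have hx : univ.image x = A := by
    ext a
    simp only [mem_image, mem_univ, true_and, x]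
    constructor
    · rintro ⟨i, rfl⟩; exact (A.equivFin.symm i).2
    · intro ha; exact ⟨A.equivFin ⟨a, ha⟩, by simp⟩
  have h : ∀ g : ZMod H → ZMod H, ((A.image g).card : ℝ) ≤
      ((k:ℝ) - 1) + (if Injective (g ∘ x) then (1:ℝ) else 0) := by
    intro g
    have e : A.image g = univ.image (g ∘ x) := by rw [← image_image, hx]
    rw [e]
    have hle : (univ.image (g ∘ x)).card ≤ k := by
      simpa using card_image_le (s := (univ : Finset (Fin k))) (f := g ∘ x)
    split_ifs with hi
    · have : ((univ.image (g ∘ x)).card : ℝ) ≤ k := by exact_mod_cast hle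
      linarith
    · have hne : (univ.image (g ∘ x)).card ≠ k := by
        intro hc
        apply hi
        rw [← Set.injOn_univ, ← coe_univ]
        apply injOn_of_card_image_eq
        simpa using hc
      have : (univ.image (g ∘ x)).card + 1 ≤ k := by omega
      have : ((univ.image (g ∘ x)).card : ℝ) + 1 ≤ k := by exact_mod_cast this
      linarith
  refine (EE_mono _ h).trans ?_
  rw [EE_add, EE_const]
  have := window hH x
  have hmu := mu_nonneg H d k
  have : 1 / (1 + mu H d k) = 1 - el H d k := by
    unfold el; field_simp; ring
  linarith

theorem card_groups {d : ℕ} (hH : H = 2 ^ d) (k q : ℕ) (A : Finset (ZMod H)) (hA : q * k ≤ A.card) :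
    EE (2*d) (fun g => ((A.image g).card : ℝ)) ≤ A.card - q * el H d k := by
  classical
  induction q generalizing A with
  | zero =>
    simp only [Nat.cast_zero, zero_mul, sub_zero]
    refine le_of_le_of_eq (EE_mono _ (Ψ := fun _ => (A.card : ℝ)) ?_) (EE_const _ _)
    intro g
    exact_mod_cast card_image_le
  | succ q ih =>
    rw [Nat.succ_mul] at hA
    obtain ⟨B, hBA, hB⟩ := exists_subset_card_eq (show k ≤ A.card by omega)
    have hc : (A \ B).card + k = A.card := by
      rw [← hB]; exact card_sdiff_add_card_eq_card hBA
    have h1 := ih (A \ B) (by omega)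
    have h2 := card_one_group hH B
    rw [hB] at h2
    have h3 : ∀ g : ZMod H → ZMod H, ((A.image g).card : ℝ) ≤
        (((A \ B).image g).card : ℝ) + ((B.image g).card : ℝ) := by
      intro g
      have : A.image g = (A \ B).image g ∪ B.image g := by
        rw [← image_union, sdiff_union_of_subset hBA]
      rw [this]
      exact_mod_cast card_union_le _ _
    refine (EE_mono _ h3).trans ?_
    rw [EE_add]
    have : ((A \ B).card : ℝ) + k = A.card := by exact_mod_cast hc
    push_cast
    linarith

theorem loss_num {d : ℕ} (hd : 10 ≤ d) (hH : H = 2 ^ d) (n : ℕ) (hn : 1 ≤ n) (hnH : n ≤ H) :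
    ∃ k q : ℕ, q * k ≤ n ∧ ∃ s : ℝ, 0 ≤ s ∧ s ^ 3 = n - 1 ∧ 1/16 * ((d:ℝ)/H) * s^4 ≤ q * el H d k := by
  have hH0 : (0:ℝ) < H := by exact_mod_cast (NeZero.pos H)
  have hd0 : (0:ℝ) < d := by exact_mod_cast (by omega : 0 < d)
  have hd3 : d ^ 3 ≤ H := by
    rw [hH]
    clear hH hnH
    induction d, hd using Nat.le_induction with
    | base => norm_num
    | succ d hd ih =>
      have := ih (by positivity)
      rw [pow_succ 2]
      nlinarith [mul_le_mul hd hd (by norm_num) (by omega), sq_nonneg d]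
  have hd3' : (d:ℝ)^3 ≤ H := by exact_mod_cast hd3
  have hn1 : (1:ℝ) ≤ n := by exact_mod_cast hn
  have hnH' : (n:ℝ) ≤ H := by exact_mod_cast hnH
  obtain ⟨s, hs0, hs⟩ : ∃ s : ℝ, 0 ≤ s ∧ s ^ 3 = n - 1 := by
    refine ⟨((n:ℝ) - 1) ^ ((1:ℝ)/3), by apply Real.rpow_nonneg; linarith, ?_⟩
    rw [← Real.rpow_natCast, ← Real.rpow_mul (by linarith)]
    norm_num
  set δ : ℝ := (d:ℝ)/H with hδ
  have hδ0 : 0 < δ := by positivity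
  have hmu : ∀ k : ℕ, mu H d k = k * (k - 1) * δ / 4 := by
    intro k; unfold mu; rw [hδ]; field_simp; ring
  by_cases hc : mu H d n ≤ 1
  · refine ⟨n, 1, by omega, s, hs0, hs, ?_⟩
    have h0 := mu_nonneg H d n
    have : mu H d n / 2 ≤ el H d n := by
      unfold el
      gcongr
      linarith
    rw [Nat.cast_one, one_mul]
    refine le_trans ?_ this
    rw [hmu]
    have : s ^ 4 ≤ n * (n - 1) := by
      have hsn : s ≤ n := by
        by_contra h
        push Not at h
        nlinarith [mul_le_mul h.le h.le (by linarith) hs0, sq_nonneg s]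
      calc s ^ 4 = s * s^3 := by ring
        _ ≤ (n:ℝ) * ((n:ℝ)-1) := by rw [hs]; gcongr
    nlinarith [mul_le_mul_of_nonneg_left this hδ0.le, mul_nonneg hδ0.le (pow_nonneg hs0 4)]
  · push Not at hc
    classical
    have hex : ∃ k : ℕ, 1 < mu H d k := ⟨n, hc⟩
    set k := Nat.find hex with hk
    have hk1 : 1 < mu H d k := Nat.find_spec hex
    have hkn : k ≤ n := Nat.find_min' hex hc
    have hk2 : 2 ≤ k := by
      by_contra h
      have : k = 0 ∨ k = 1 := by omega
      rcases this with h | h <;> rw [h, hmu] at hk1 <;> norm_num at hk1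
    have hk3 : mu H d (k-1) ≤ 1 := by
      have := Nat.find_min hex (m := k - 1) (by omega)
      linarith
    have hk2' : (2:ℝ) ≤ k := by exact_mod_cast hk2
    rw [hmu, Nat.cast_sub (by omega)] at hk3
    push_cast at hk3
    have hδ1 : δ ≤ 1 / 4 := by
      rw [hδ, div_le_iff₀ hH0]
      have : (10:ℝ) ≤ d := by exact_mod_cast hd
      nlinarith [mul_le_mul this this (by norm_num) (by linarith)]
    have hkδ : (k:ℝ)^2 * δ ≤ 16 := by nlinarith [sq_nonneg ((k:ℝ) - 4)]
    refine ⟨k, n / k, Nat.div_mul_le_self n k, s, hs0, hs, ?_⟩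
    have hel : 1/2 ≤ el H d k := by
      unfold el
      rw [div_le_div_iff₀ (by norm_num) (by linarith)]
      linarith
    have hq : (n:ℝ) ≤ 2 * k * (n / k : ℕ) := by
      have h1 := Nat.div_add_mod n k
      have h2 := Nat.mod_lt n (show 0 < k by omega)
      have h3 : 1 ≤ n / k := Nat.div_pos hkn (by omega)
      have : n ≤ 2 * k * (n / k) := by nlinarith
      exact_mod_cast this
    have hsδ : s * (k * δ) ≤ 4 := by
      have hs2 : s ^ 2 * δ ≤ 1 := by
        have h6 : (s^2 * δ)^3 ≤ 1 := by
          have : (s^2 * δ)^3 = (n-1)^2 * δ^3 := by rw [← hs]; ring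
          rw [this, hδ, div_pow, mul_div_assoc', div_le_one (by positivity)]
          have : ((n:ℝ)-1)^2 ≤ H^2 := by gcongr; linarith
          calc ((n:ℝ)-1)^2 * (d:ℝ)^3 ≤ (H:ℝ)^2 * (H:ℝ) := by gcongr
            _ = (H:ℝ)^3 := by ring
        by_contra h
        push Not at h
        have := one_lt_pow₀ h (n := 3) (by norm_num)
        linarith
      have : (s * (k * δ))^2 ≤ 4^2 := by
        calc (s * (k * δ))^2 = (s^2*δ) * (k^2*δ) := by ring
          _ ≤ 1 * 16 := by gcongr
          _ = 4^2 := by norm_num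
      exact abs_le_of_sq_le_sq' this (by norm_num) |>.2
    have hkey : δ * s^4 ≤ 8 * (n / k : ℕ) := by
      have : k * (δ * s^4) ≤ k * (8 * (n / k : ℕ)) := by
        calc (k:ℝ) * (δ * s^4) = (s * (k*δ)) * s^3 := by ring
          _ ≤ 4 * (n:ℝ) := by rw [hs]; gcongr <;> linarith
          _ ≤ (k:ℝ) * (8 * ((n / k : ℕ) : ℝ)) := by linarith
      exact le_of_mul_le_mul_left this (by linarith)
    have hqn : (0:ℝ) ≤ (n / k : ℕ) := Nat.cast_nonneg _
    calc 1/16 * δ * s^4 ≤ (n / k : ℕ) * (1/2) := by linarith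
      _ ≤ _ := by gcongr

theorem loss {d : ℕ} (hd : 10 ≤ d) (hH : H = 2 ^ d) (A : Finset (ZMod H)) (hA : 1 ≤ A.card) (r : ℝ) (hr : 0 ≤ r) :
    EE (2*d) (fun g => ((A.image g).card : ℝ)) ≤
      A.card - 1/16 * ((d:ℝ)/H) * (4/3 * r * (A.card - 1) - r^4/3) := by
  have hle : A.card ≤ H := by
    have := card_le_univ A
    rwa [ZMod.card] at this
  obtain ⟨k, q, hqk, s, hs0, hs, h⟩ := loss_num hd hH A.card hA hle
  refine (card_groups hH k q A hqk).trans ?_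
  have : 4/3 * r * ((A.card:ℝ) - 1) - r^4/3 ≤ s^4 := by
    rw [← hs]
    nlinarith [mul_nonneg (sq_nonneg (s - r)) (add_nonneg (add_nonneg (mul_nonneg (by norm_num : (0:ℝ) ≤ 3) (sq_nonneg s)) (mul_nonneg (mul_nonneg (by norm_num : (0:ℝ) ≤ 2) hs0) hr)) (sq_nonneg r))]
  have h2 : 1/16 * ((d:ℝ)/H) * (4/3 * r * (A.card - 1) - r^4/3) ≤ 1/16 * ((d:ℝ)/H) * s^4 := by
    gcongr
  linarith

theorem blocks_rec {d : ℕ} (hd : 10 ≤ d) (hH : H = 2 ^ d) (j : ℕ) :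
    EE (2*d*j) (fun g => (((univ : Finset (ZMod H)).image g).card : ℝ)) - 1 ≤
      (1 / (((d:ℝ)/H) * (1 + j/48))) ^ 3 := by
  have hH0 : (0:ℝ) < H := by exact_mod_cast (NeZero.pos H)
  have hd0 : (10:ℝ) ≤ d := by exact_mod_cast hd
  have hdH : d ≤ H := by rw [hH]; exact Nat.lt_two_pow_self.le
  have hdH' : (d:ℝ) ≤ H := by exact_mod_cast hdH
  have hd3 : d ^ 3 ≤ H := by
    rw [hH]
    clear hH hdH hdH' hd0
    induction d, hd using Nat.le_induction with
    | base => norm_num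
    | succ d hd ih =>
      have := ih 
      rw [pow_succ 2]
      nlinarith [mul_le_mul hd hd (by norm_num) (by omega), sq_nonneg d]
  have hd3' : (d:ℝ)^3 ≤ H := by exact_mod_cast hd3
  set δ : ℝ := (d:ℝ)/H with hδ
  have hδ0 : 0 < δ := by positivity
  induction j with
  | zero =>
    simp only [Nat.mul_zero, EE, image_id, card_univ, ZMod.card]
    have : (1 / (δ * (1 + ((0:ℕ):ℝ)/48)))^3 = H^3 / d^3 := by
      rw [hδ]; simp [div_pow]
    rw [this]
    have : (H:ℝ) ≤ H^3/d^3 := by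
      rw [le_div_iff₀ (by positivity)]
      have : (1:ℝ) ≤ H := by linarith
      calc (H:ℝ) * d^3 ≤ H * H := by gcongr
        _ ≤ H * H * H := by nlinarith [mul_pos hH0 hH0]
        _ = H^3 := by ring
    linarith
  | succ j ih =>
    rw [Nat.mul_succ, EE_comp]
    set X := EE (2*d*j) (fun g => (((univ : Finset (ZMod H)).image g).card : ℝ)) with hX
    set r : ℝ := 1 / (δ * (1 + j/48)) with hr
    have hr0 : 0 < r := by positivity
    have hδr : δ * r ≤ 1 := by
      rw [hr]; field_simp; 
      have : (0:ℝ) ≤ j := Nat.cast_nonneg _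
      linarith
    have h1 : ∀ g1 : ZMod H → ZMod H,
        EE (2*d) (fun g2 => (((univ : Finset (ZMod H)).image (g2 ∘ g1)).card : ℝ)) ≤
        (1/16 * δ * (4/3 * r + r^4/3)) + (1 - 1/16 * δ * (4/3 * r)) * (((univ : Finset (ZMod H)).image g1).card : ℝ) := by
      intro g1
      have := loss hd hH (univ.image g1) (card_pos.2 (univ_nonempty.image g1)) r hr0.le
      simp only [image_image] at this
      refine this.trans (le_of_eq ?_)
      ring
    have h2 := EE_mono (2*d*j) h1
    rw [EE_add, EE_const, EE_mul, ← hX] at h2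
    have h3 : X - 1 ≤ r ^ 3 := ih
    have h4 : (1 - 1/16 * δ * (4/3 * r)) * (X - 1) ≤ (1 - 1/16 * δ * (4/3 * r)) * r^3 := by
      apply mul_le_mul_of_nonneg_left h3
      nlinarith
    have h5 : 1 / (δ * (1 + ((j+1 : ℕ):ℝ)/48)) = r / (1 + δ * r / 48) := by
      rw [hr]; push_cast; field_simp; ring
    rw [h5, div_pow]
    have h6 : r^3 * (1 - δ * r / 16) ≤ r^3 / (1 + δ * r / 48)^3 := by
      rw [le_div_iff₀ (by positivity), mul_assoc]
      apply mul_le_of_le_one_right (by positivity)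
      set y := δ * r
      have hy : 0 ≤ y := by positivity
      have e : (1 - y/16) * (1 + y/48)^3 = 1 - (y/48)^2 * (6 + 8 * (y/48) + 3 * (y/48)^2) := by ring
      rw [e]
      have : 0 ≤ (y/48)^2 * (6 + 8 * (y/48) + 3 * (y/48)^2) := by positivity
      linarith
    refine le_trans ?_ h6
    nlinarith

end loss
end BF


namespace BF
open Finset Function

section link
variable {H : ℕ} [NeZero H] 

def compo : (n : ℕ) → (Fin n → ZMod H → Bool) → ZMod H → ZMod H
  | 0, _ => id
  | n+1, σ => compo n (Fin.tail σ) ∘ stp (σ 0)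

theorem av_compo (n : ℕ) (Φ : (ZMod H → ZMod H) → ℝ) :
    av (fun σ : Fin n → ZMod H → Bool => Φ (compo n σ)) = EE n Φ := by
  induction n generalizing Φ with
  | zero => simp only [compo, EE]; rw [av_const]
  | succ n ih =>
    rw [av_cons]
    simp only [compo, Fin.tail_cons, Fin.cons_zero, EE, ← ih]

omit [NeZero H] in
theorem bstep_iter (β : ZMod H × ZMod H → Bool) (n : ℕ) (h t : ZMod H) :
    (bstep H H β)^[n] (h, t) =
      (compo n (fun j h => β (h, t + ((j:ℕ) : ZMod H))) h, t + n) := by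
  induction n generalizing h t with
  | zero => simp [compo]
  | succ n ih =>
    rw [iterate_succ, comp_apply, bstep, ih]
    simp only [compo, comp_apply]
    refine Prod.ext ?_ ?_
    · simp only
      congr 1
      · funext j h'
        simp only [Fin.tail, Fin.val_succ]
        push_cast
        rw [add_comm ((j:ℕ) : ZMod H) 1, add_assoc]
      · simp [stp, bt]
    · simp only; push_cast; ring

def FF (β : ZMod H × ZMod H → Bool) (t : ZMod H) : ZMod H → ZMod H :=
  fun h => ((bstep H H β)^[H] (h, t)).1

omit [NeZero H] in
theorem bstep_FF (β : ZMod H × ZMod H → Bool) (t h : ZMod H) :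
    (bstep H H β)^[H] (h, t) = (FF β t h, t) := by
  rw [FF]
  refine Prod.ext rfl ?_
  rw [bstep_iter]; simp

omit [NeZero H] in
theorem bstep_FF_iter (β : ZMod H × ZMod H → Bool) (t h : ZMod H) (n : ℕ) :
    (bstep H H β)^[H * n] (h, t) = ((FF β t)^[n] h, t) := by
  induction n generalizing h with
  | zero => simp
  | succ n ih =>
    rw [Nat.mul_succ, iterate_add_apply, bstep_FF, ih, iterate_succ_apply]

theorem av_FF (t : ZMod H) (Φ : (ZMod H → ZMod H) → ℝ) :
    av (fun β : ZMod H × ZMod H → Bool => Φ (FF β t)) = EE H Φ := by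
  rw [← av_compo]
  let e0 : Fin H → ZMod H := fun j => t + ((j:ℕ) : ZMod H)
  have hinj : Injective e0 := by
    intro a b hab
    have := add_left_cancel hab
    rw [ZMod.natCast_eq_natCast_iff'] at this
    rw [Nat.mod_eq_of_lt a.2, Nat.mod_eq_of_lt b.2] at this
    exact Fin.ext this
  have hbij : Bijective e0 := (Fintype.bijective_iff_injective_and_card e0).2 ⟨hinj, by simp [ZMod.card]⟩
  let e1 : Fin H ≃ ZMod H := Equiv.ofBijective e0 hbij
  let e2 : (ZMod H × ZMod H) ≃ (Fin H × ZMod H) :=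
    (Equiv.prodComm _ _).trans (Equiv.prodCongr e1.symm (Equiv.refl _))
  let E : (ZMod H × ZMod H → Bool) ≃ (Fin H → ZMod H → Bool) :=
    (Equiv.arrowCongr e2 (Equiv.refl _)).trans (Equiv.curry _ _ _)
  rw [← av_equiv E]
  congr 1
  funext β
  congr 1
  funext h
  rw [FF, bstep_iter]
  rfl

open Classical in
theorem card_le_periodic (β : ZMod H × ZMod H → Bool) (t : ZMod H) {m : ℕ} (u : Fin m → ZMod H) :
    (Nat.card {S : Set (ZMod H × ZMod H) //
              (∃ v, onCycle (bstep H H β) v ∧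
                S = {w | ∃ j, (bstep H H β)^[j] v = w}) ∧
              ∀ i : Fin m, ∀ w ∈ S,
                ¬ ∃ j, (bstep H H β)^[j] (u i, t) = w}) ≤
    Nat.card {h : ZMod H // h ∈ periodicPts (FF β t) ∧ ∀ i, FF β t h ≠ FF β t (u i)} := by
  set g := bstep H H β with hg
  set F := FF β t with hF
  have key : ∀ S : {S : Set (ZMod H × ZMod H) //
              (∃ v, onCycle g v ∧ S = {w | ∃ j, g^[j] v = w}) ∧
              ∀ i : Fin m, ∀ w ∈ S, ¬ ∃ j, g^[j] (u i, t) = w},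
      ∃ h : {h : ZMod H // h ∈ periodicPts F ∧ ∀ i, F h ≠ F (u i)},
        S.1 = {w | ∃ j, g^[j] (h.1, t) = w} := by
    rintro ⟨S, ⟨⟨a, s⟩, ⟨k, hk, hv⟩, rfl⟩, hS⟩
    set n := (t - s).val with hn
    set h := (g^[n] (a, s)).1 with hh
    have e1 : g^[n] (a, s) = (h, t) := by
      refine Prod.ext rfl ?_
      rw [hg, bstep_iter]
      simp [hn]
    have hvk : ∀ q, g^[k * q] (a, s) = (a, s) := by
      intro q
      exact (show IsPeriodicPt g k (a, s) from hv).mul_const q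
    have e2 : ∀ q, g^[k * q] (h, t) = (h, t) := by
      intro q
      rw [← e1, ← iterate_add_apply, add_comm, iterate_add_apply, hvk]
    clear_value h
    refine ⟨⟨h, ?_, ?_⟩, ?_⟩
    · refine ⟨k, hk, ?_⟩
      have := e2 H
      rw [mul_comm, hg, bstep_FF_iter] at this
      exact congrArg Prod.fst this
    · intro i hi
      refine hS i (F h, t) ?_ ⟨H, ?_⟩
      · refine ⟨H + n, ?_⟩
        rw [iterate_add_apply, e1, hg, bstep_FF]
      · rw [hi, hg, bstep_FF]
    · ext w
      constructor
      · rintro ⟨j, rfl⟩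
        refine ⟨j + (k * n - n), ?_⟩
        rw [← e1, ← iterate_add_apply]
        have : n ≤ k * n := Nat.le_mul_of_pos_left n hk
        rw [show j + (k * n - n) + n = j + k * n by omega, iterate_add_apply, hvk]
      · rintro ⟨j, rfl⟩
        exact ⟨j + n, by rw [iterate_add_apply]; exact congrArg _ e1⟩
  choose f hf using key
  apply Nat.card_le_card_of_injective f
  intro S S' hSS
  apply Subtype.ext
  rw [hf S, hf S', hSS]

def rot {k : ℕ} (i : Fin (k+1)) : Fin (k+1) := i + 1

theorem rot_inj {k : ℕ} : Injective (rot (k := k)) := fun _ _ h => add_right_cancel h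

def Good {m k : ℕ} (F : ZMod H → ZMod H) (u : Fin m → ZMod H) (v : Fin (k+1) → ZMod H) : Prop :=
  Injective v ∧ F ∘ v = v ∘ rot ∧ ∀ i, F (v 0) ≠ F (u i)

open Classical in
theorem periodic_le_sum (F : ZMod H → ZMod H) {m : ℕ} (u : Fin m → ZMod H) :
    (Nat.card {h : ZMod H // h ∈ periodicPts F ∧ ∀ i, F h ≠ F (u i)} : ℝ) ≤
      ∑ k ∈ range H, ∑ v : Fin (k+1) → ZMod H, if Good F u v then (1:ℝ) else 0 := by
  have h1 : (∑ k ∈ range H, ∑ v : Fin (k+1) → ZMod H, if Good F u v then (1:ℝ) else 0)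
      = ((((range H).sigma fun k => (univ : Finset (Fin (k+1) → ZMod H)).filter
          fun v => Good F u v).card : ℕ) : ℝ) := by
    rw [card_sigma]
    push_cast
    apply sum_congr rfl
    intro k _
    rw [sum_boole]
  rw [h1, Nat.card_eq_fintype_card, Fintype.card_subtype]
  norm_cast
  apply card_le_card_of_injOn
    (fun h => (⟨minimalPeriod F h - 1, fun i => F^[i] h⟩ : Σ k, (Fin (k+1) → ZMod H)))
  · intro h hh
    simp only [coe_filter, mem_univ, true_and, Set.mem_ofPred_eq] at hh
    obtain ⟨hp, hu⟩ := hh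
    have hpos := minimalPeriod_pos_of_mem_periodicPts hp
    have hle : minimalPeriod F h ≤ H := by
      have := minimalPeriod_le_card (f := F) (x := h)
      rwa [ZMod.card] at this
    simp only [coe_sigma, Set.mem_sigma_iff, coe_range, Set.mem_Iio, coe_filter, mem_univ, true_and,
      Set.mem_ofPred_eq]
    refine ⟨by omega, ?_, ?_, hu⟩
    · intro i j hij
      have := (iterate_eq_iterate_iff_of_lt_minimalPeriod (f := F) (x := h) (m := i) (n := j)
        (by omega) (by omega)).1 hij
      exact Fin.ext this
    · funext i
      simp only [comp_apply, rot]
      rw [← iterate_succ_apply' F]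
      have : ((i + 1 : Fin (minimalPeriod F h - 1 + 1)) : ℕ) = ((i:ℕ) + 1) % minimalPeriod F h := by
        rw [Fin.val_add]
        rw [Fin.val_one']
        rw [Nat.add_mod_mod]
        congr 1
        omega
      rw [this, iterate_mod_minimalPeriod_eq]
  · intro a _ b _ hab
    simp only [Sigma.mk.injEq] at hab
    obtain ⟨h1, h2⟩ := hab
    have : ∀ (p q : ℕ) (hpq : p = q) (f : Fin (p+1) → ZMod H) (g : Fin (q+1) → ZMod H), HEq f g → f 0 = g 0 := by
      rintro p q rfl f g hfg
      rw [eq_of_heq hfg]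
    exact this _ _ h1 _ _ h2

open Classical in
theorem unhit (g : ZMod H → ZMod H) (m : ℕ) :
    (∑ v : ZMod H, ∑ u : Fin m → ZMod H, if ∀ i, g v ≠ g (u i) then (1:ℝ) else 0) ≤
      (H:ℝ)^(m+1) / (m+1) * ((univ : Finset (ZMod H)).image g).card := by
  have hH0 : (0:ℝ) < H := by exact_mod_cast (NeZero.pos H)
  let n : ZMod H → ℕ := fun y => (univ.filter fun w => g w = y).card
  have hn : ∀ y, n y ≤ H := by
    intro y
    have := card_le_univ (univ.filter fun w => g w = y)
    rwa [ZMod.card] at this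
  have h1 : ∀ v : ZMod H, (∑ u : Fin m → ZMod H, if ∀ i, g v ≠ g (u i) then (1:ℝ) else 0)
      = ((H:ℝ) - n (g v)) ^ m := by
    intro v
    rw [sum_boole]
    have : (univ.filter fun u : Fin m → ZMod H => ∀ i, g v ≠ g (u i)) =
        Fintype.piFinset (fun _ : Fin m => univ.filter fun w => ¬ g w = g v) := by
      ext u; simp [Fintype.mem_piFinset, eq_comm]
    rw [this, Fintype.card_piFinset_const]
    have hc := card_filter_add_card_filter_not (s := (univ : Finset (ZMod H))) (fun w => g w = g v)
    rw [card_univ, ZMod.card] at hc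
    push_cast
    congr 1
    rw [eq_sub_iff_add_eq]
    exact_mod_cast (by rw [add_comm]; exact hc)
  simp only [h1]
  have h2 : (∑ v : ZMod H, ((H:ℝ) - n (g v)) ^ m) =
      ∑ y ∈ univ.image g, (n y : ℝ) * ((H:ℝ) - n y)^m := by
    rw [sum_comp (fun y => ((H:ℝ) - n y)^m) g]
    apply sum_congr rfl
    intro y _
    rw [nsmul_eq_mul]
  rw [h2, mul_comm, ← nsmul_eq_mul]
  apply sum_le_card_nsmul
  intro y _
  have hp : (n y : ℝ) ≤ H := by exact_mod_cast hn y
  set p : ℝ := n y / H with hpdef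
  have hp0 : 0 ≤ p := by positivity
  have hp1 : p ≤ 1 := by rw [hpdef, div_le_one hH0]; exact hp
  have e1 : (n y : ℝ) = p * H := by rw [hpdef]; field_simp
  have e2 : (n y : ℝ) * ((H:ℝ) - n y)^m = (H:ℝ)^(m+1) * (p * (1-p)^m) := by
    rw [e1, show (H:ℝ) - p * H = H * (1 - p) by ring, mul_pow]; ring
  rw [e2, div_eq_mul_inv]
  gcongr
  rw [← one_div, le_div_iff₀ (by positivity)]
  have hb : 1 + m * p ≤ (1 + p)^m := one_add_mul_le_pow (by linarith) m
  have hq : (1-p)^m * (1+p)^m ≤ 1 := by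
    rw [← mul_pow]
    apply pow_le_one₀
    · nlinarith
    · nlinarith
  have h0 : 0 ≤ (1-p)^m := pow_nonneg (by linarith) m
  calc p * (1-p)^m * (m+1) = (1-p)^m * (p + m * p) := by ring
    _ ≤ (1-p)^m * (1 + p)^m := by gcongr; linarith
    _ ≤ 1 := hq

end link
end BF


namespace BF
open Finset Function

section fin
variable {H : ℕ} [NeZero H] 

open Classical in
theorem per_uv {d n1 n2 : ℕ} (hH : H = 2 ^ d) (hsum : n1 + (n2 + d) = H) {m k : ℕ} (ρ : ℝ)
    (hρ : ∀ x : Fin (k+1) → ZMod H, EE n2 (fun g => if Injective (g ∘ x) then (1:ℝ) else 0) ≤ ρ)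
    (u : Fin m → ZMod H) (v : Fin (k+1) → ZMod H) :
    EE H (fun F => if Good F u v then (1:ℝ) else 0) ≤
      ρ / (H:ℝ)^(k+1) * EE n1 (fun g => if ∀ i, g (v 0) ≠ g (u i) then (1:ℝ) else 0) := by
  have hH0 : (0:ℝ) < H := by exact_mod_cast (NeZero.pos H)
  have hρ0 : 0 ≤ ρ := by
    refine le_trans ?_ (hρ v)
    refine (EE_const (H := H) n2 0).symm.le.trans (EE_mono _ fun g => ?_)
    split_ifs <;> norm_num
  by_cases hv : Injective v
  · have e := EE_comp (H := H) n1 (n2 + d) (fun F => if Good F u v then (1:ℝ) else 0)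
    rw [hsum] at e
    rw [e, ← EE_mul]
    apply EE_mono
    intro g1
    rw [EE_comp]
    by_cases hu : ∀ i, g1 (v 0) ≠ g1 (u i)
    · rw [if_pos hu, mul_one]
      have h1 : ∀ g2 : ZMod H → ZMod H,
          EE d (fun g3 => if Good ((g3 ∘ g2) ∘ g1) u v then (1:ℝ) else 0) ≤
          1 / (H:ℝ)^(k+1) * (if Injective (g2 ∘ (g1 ∘ v)) then (1:ℝ) else 0) := by
        intro g2
        by_cases hi : Injective (g2 ∘ (g1 ∘ v))
        · rw [if_pos hi, mul_one]
          refine le_trans ?_ (hit_bound hH (g2 ∘ (g1 ∘ v)) (v ∘ rot) (hv.comp rot_inj))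
          apply EE_mono
          intro g3
          by_cases hg : Good ((g3 ∘ g2) ∘ g1) u v
          · rw [if_pos hg, if_pos]
            exact hg.2.1
          · rw [if_neg hg]; positivity
        · rw [if_neg hi, mul_zero]
          have : ∀ g3 : ZMod H → ZMod H, ¬ Good ((g3 ∘ g2) ∘ g1) u v := by
            intro g3 hg
            apply hi
            have h2 : Injective (g3 ∘ (g2 ∘ (g1 ∘ v))) := by
              have := hg.2.1
              have h3 : g3 ∘ (g2 ∘ (g1 ∘ v)) = v ∘ rot := this
              rw [h3]
              exact hv.comp rot_inj
            exact Injective.of_comp h2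
          simp only [this, if_false]
          rw [EE_const]
      refine (EE_mono _ h1).trans ?_
      rw [EE_mul]
      refine (mul_le_mul_of_nonneg_left (hρ (g1 ∘ v)) (by positivity)).trans (le_of_eq ?_)
      ring
    · rw [if_neg hu, mul_zero]
      have : ∀ g2 g3 : ZMod H → ZMod H, ¬ Good ((g3 ∘ g2) ∘ g1) u v := by
        intro g2 g3 hg
        apply hu
        intro i hi
        apply hg.2.2 i
        simp only [comp_apply, hi]
      simp only [this, if_false, EE_const]
      exact le_rfl
  · have : ∀ F : ZMod H → ZMod H, ¬ Good F u v := fun F h => hv h.1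
    simp only [this, if_false, EE_const]
    apply mul_nonneg (by positivity)
    refine (EE_const (H := H) n1 0).symm.le.trans (EE_mono _ fun g => ?_)
    split_ifs <;> norm_num

theorem sum_head (k : ℕ) (f : ZMod H → ℝ) :
    ∑ v : Fin (k+1) → ZMod H, f (v 0) = (H:ℝ)^k * ∑ a, f a := by
  rw [← (Fin.consEquiv (fun _ : Fin (k+1) => ZMod H)).sum_comp, Fintype.sum_prod_type, mul_sum]
  apply sum_congr rfl
  intro a _
  simp [Fin.consEquiv, ZMod.card]

open Classical in
theorem per_k {d n1 n2 : ℕ} (hH : H = 2 ^ d) (hsum : n1 + (n2 + d) = H) {m k : ℕ} (ρ C1 : ℝ)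
    (hρ0 : 0 ≤ ρ)
    (hρ : ∀ x : Fin (k+1) → ZMod H, EE n2 (fun g => if Injective (g ∘ x) then (1:ℝ) else 0) ≤ ρ)
    (hC : EE n1 (fun g => (((univ : Finset (ZMod H)).image g).card : ℝ)) ≤ C1) :
    ∑ u : Fin m → ZMod H, ∑ v : Fin (k+1) → ZMod H, EE H (fun F => if Good F u v then (1:ℝ) else 0)
      ≤ (H:ℝ)^m * C1 / (m+1) * ρ := by
  have hH0 : (0:ℝ) < H := by exact_mod_cast (NeZero.pos H)
  have h1 : ∑ u : Fin m → ZMod H, ∑ v : Fin (k+1) → ZMod H,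
      EE H (fun F => if Good F u v then (1:ℝ) else 0) ≤
      ∑ u : Fin m → ZMod H, ∑ v : Fin (k+1) → ZMod H, 
      ρ / (H:ℝ)^(k+1) * EE n1 (fun g => if ∀ i, g (v 0) ≠ g (u i) then (1:ℝ) else 0) :=
    sum_le_sum fun u _ => sum_le_sum fun v _ => per_uv hH hsum ρ hρ u v
  refine h1.trans ?_
  simp only [← mul_sum]
  have h2 : ∀ u : Fin m → ZMod H, (∑ v : Fin (k+1) → ZMod H,
      EE n1 (fun g => if ∀ i, g (v 0) ≠ g (u i) then (1:ℝ) else 0)) = 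
      (H:ℝ)^k * ∑ a, EE n1 (fun g => if ∀ i, g a ≠ g (u i) then (1:ℝ) else 0) := fun u =>
    sum_head k (fun a => EE n1 (fun g => if ∀ i, g a ≠ g (u i) then (1:ℝ) else 0))
  simp only [h2, ← mul_sum]
  rw [sum_comm]
  simp only [← EE_sum]
  have h3 := EE_mono n1 (fun g => unhit g m (H := H))
  rw [EE_mul] at h3
  have h4 : (H:ℝ)^(m+1) / (m+1) * EE n1 (fun g => (((univ : Finset (ZMod H)).image g).card : ℝ))
    ≤ (H:ℝ)^(m+1) / (m+1) * C1 := by gcongr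
  have h5 := mul_le_mul_of_nonneg_left (h3.trans h4) (show 0 ≤ ρ / (H:ℝ)^(k+1) * (H:ℝ)^k by positivity)
  rw [mul_assoc] at h5
  refine h5.trans (le_of_eq ?_)
  field_simp
  ring

theorem EE_card_anti (a b : ℕ) :
    EE (a+b) (fun g => (((univ : Finset (ZMod H)).image g).card : ℝ)) ≤
    EE a (fun g => (((univ : Finset (ZMod H)).image g).card : ℝ)) := by
  rw [EE_comp]
  apply EE_mono
  intro g1
  refine le_of_le_of_eq (EE_mono _ (Ψ := fun _ => (((univ : Finset (ZMod H)).image g1).card : ℝ)) ?_) (EE_const _ _)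
  intro g2
  rw [← image_image]
  exact_mod_cast card_image_le

theorem tele (n : ℕ) : ∑ k ∈ range n, 1 / (1 + ((k:ℝ)+1) * k / 64) ≤ 129 - 128 / (n + 1) := by
  induction n with
  | zero => norm_num
  | succ n ih =>
    rw [sum_range_succ]
    have : 1 / (1 + ((n:ℝ)+1) * n / 64) ≤ 128 / (n+1) - 128/((n:ℝ)+1+1) := by
      have hn : (0:ℝ) ≤ n := Nat.cast_nonneg n
      rw [div_sub_div _ _ (by positivity) (by positivity), div_le_div_iff₀ (by positivity) (by positivity)]
      nlinarith [sq_nonneg ((n:ℝ)-1)]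
    push_cast
    linarith

theorem params {d : ℕ} (hH : H = 2 ^ d) : ∃ J n1 : ℕ, n1 + (2*d*J + d) = H ∧
    EE n1 (fun g => (((univ : Finset (ZMod H)).image g).card : ℝ)) ≤ 768^3 + 1 ∧
    ∑ k ∈ range H, (1 / (1 + mu H d (k+1)))^J ≤ 512 := by
  have hH0 : (0:ℝ) < H := by exact_mod_cast (NeZero.pos H)
  have hdH : d ≤ H := by rw [hH]; exact Nat.lt_two_pow_self.le
  by_cases hd : 10 ≤ d
  · set J := H / (8*d) with hJ
    have hJ1 : 8 * d * J ≤ H := Nat.mul_div_le H (8*d)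
    have h8 : 8 * d ≤ H := by
      rw [hH]
      clear hH hdH hJ hJ1 J hH0
      induction d, hd using Nat.le_induction with
      | base => norm_num
      | succ d hd ih => rw [pow_succ]; omega
    have hJpos : 1 ≤ J := Nat.div_pos h8 (by omega)
    have hJ2 : H < 8 * d * (J+1) := Nat.lt_mul_div_succ H (by omega)
    have hJ3 : H ≤ 16 * (d * J) := by nlinarith
    have hJ3' : (H:ℝ) ≤ 16 * (d * J) := by exact_mod_cast hJ3
    have hd0 : (10:ℝ) ≤ d := by exact_mod_cast hd
    have hdJ : 8 * (d * J) ≤ H := by rw [← mul_assoc]; exact hJ1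
    have hrest : 4 * (d * J) + d ≤ H := by omega
    refine ⟨J, 2*d*J + (H - (4 * (d*J) + d)), ?_, ?_, ?_⟩
    · have : 2 * d * J = 2 * (d * J) := by ring
      omega
    · refine (EE_card_anti _ _).trans ?_
      have := blocks_rec hd hH J
      have h2 : (1 / (((d:ℝ)/H) * (1 + J/48))) ^ 3 ≤ 768 ^ 3 := by
        gcongr
        rw [div_le_iff₀ (by positivity)]
        have : (1:ℝ)/16 ≤ (d:ℝ)/H * J := by
          rw [div_mul_eq_mul_div, div_le_div_iff₀ (by norm_num) hH0]; linarith
        have h0 : 0 ≤ (d:ℝ)/H := by positivity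
        nlinarith
      linarith
    · have h1 : ∀ k ∈ range H, (1 / (1 + mu H d (k+1)))^J ≤ 1 / (1 + ((k:ℝ)+1) * k / 64) := by
        intro k _
        have hmu := mu_nonneg H d (k+1)
        rw [div_pow, one_pow]
        apply one_div_le_one_div_of_le (by positivity)
        have hb : 1 + J * mu H d (k+1) ≤ (1 + mu H d (k+1))^J := one_add_mul_le_pow (by linarith) J
        refine le_trans ?_ hb
        have e : (J:ℝ) * mu H d (k+1) = (((k:ℝ)+1) * k / 4) * ((d * J)/H) := by
          unfold mu; push_cast; field_simp; ring
        rw [e]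
        have : (1:ℝ)/16 ≤ (d * J)/H := by
          rw [div_le_div_iff₀ (by norm_num) hH0]; linarith
        have h2 : (((k:ℝ)+1) * k / 4) * (1/16) ≤ (((k:ℝ)+1) * k / 4) * ((d * J)/H) := by gcongr
        linarith
      refine (sum_le_sum h1).trans ((tele H).trans ?_)
      have : (0:ℝ) ≤ 128 / (H+1) := by positivity
      linarith
  · have hH5 : H ≤ 512 := by
      rw [hH]
      calc 2^d ≤ 2^9 := Nat.pow_le_pow_right (by norm_num) (by omega)
        _ = 512 := by norm_num
    have hH5' : (H:ℝ) ≤ 512 := by exact_mod_cast hH5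
    refine ⟨0, H - d, by omega, ?_, ?_⟩
    · have := EE_card_anti (H := H) 0 (H - d)
      rw [zero_add] at this
      refine this.trans ?_
      simp only [EE, image_id, card_univ, ZMod.card]
      linarith
    · simp
      exact hH5

end fin
end BF

/-- In the nonmonotone ensemble on `Ω_{H,W}` with `W = H`
(`H = 2^d`), pick a uniformly random time slice `t₀` and `m` independent uniform
vertices of slice `t₀`, and follow the path from each of them until it revisits
a vertex (so the visited set of each path is its forward orbit).  There is a
universal constant `C` such that the expected number of directed cycles of the
random subgraph containing no visited vertex is at most `C/(m+1)`. -/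
theorem statement12 :
    ∃ C > (0 : ℝ), ∀ d H m : ℕ, H = 2 ^ d → ∀ _ : NeZero H,
      (∑ t₀ : ZMod H, ∑ u : Fin m → ZMod H, ∑ β : ZMod H × ZMod H → Bool,
          (Nat.card {S : Set (ZMod H × ZMod H) //
              (∃ v, onCycle (bstep H H β) v ∧
                S = {w | ∃ j, (bstep H H β)^[j] v = w}) ∧
              ∀ i : Fin m, ∀ w ∈ S,
                ¬ ∃ j, (bstep H H β)^[j] (u i, t₀) = w} : ℝ))
          / ((H : ℝ) * (H : ℝ) ^ m * 2 ^ (H * H))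
        ≤ C / (m + 1) := by
  classical
  refine ⟨(768^3 + 1) * 512, by norm_num, ?_⟩
  intro d H m hH hne
  have hH0 : (0:ℝ) < H := by exact_mod_cast (NeZero.pos H)
  obtain ⟨J, n1, hsum, hC1, hC2⟩ := BF.params hH
  rw [div_le_iff₀ (by positivity)]
  have key : ∀ t₀ : ZMod H, (∑ u : Fin m → ZMod H, ∑ β : ZMod H × ZMod H → Bool,
          (Nat.card {S : Set (ZMod H × ZMod H) //
              (∃ v, onCycle (bstep H H β) v ∧
                S = {w | ∃ j, (bstep H H β)^[j] v = w}) ∧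
              ∀ i : Fin m, ∀ w ∈ S,
                ¬ ∃ j, (bstep H H β)^[j] (u i, t₀) = w} : ℝ))
      ≤ 2 ^ (H*H) * ((H:ℝ)^m * (768^3 + 1) / (m+1) * 512) := by
    intro t₀
    have h1 : ∀ u : Fin m → ZMod H, (∑ β : ZMod H × ZMod H → Bool,
          (Nat.card {S : Set (ZMod H × ZMod H) //
              (∃ v, onCycle (bstep H H β) v ∧
                S = {w | ∃ j, (bstep H H β)^[j] v = w}) ∧
              ∀ i : Fin m, ∀ w ∈ S,
                ¬ ∃ j, (bstep H H β)^[j] (u i, t₀) = w} : ℝ)) ≤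
        2 ^ (H*H) * ∑ k ∈ Finset.range H, ∑ v : Fin (k+1) → ZMod H,
          BF.EE H (fun F => if BF.Good F u v then (1:ℝ) else 0) := by
      intro u
      have e := BF.av_FF t₀ (fun F => ∑ k ∈ Finset.range H, ∑ v : Fin (k+1) → ZMod H,
        if BF.Good F u v then (1:ℝ) else 0)
      rw [BF.EE_sum] at e
      simp only [BF.EE_sum] at e
      rw [← e]
      unfold BF.av
      have hc : (Fintype.card (ZMod H × ZMod H → Bool) : ℝ) = 2 ^ (H*H) := by
        simp [ZMod.card]
      rw [hc, mul_div_cancel₀ _ (by positivity)]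
      apply Finset.sum_le_sum
      intro β _
      refine le_trans ?_ (BF.periodic_le_sum (BF.FF β t₀) u)
      exact_mod_cast BF.card_le_periodic β t₀ u
    refine (Finset.sum_le_sum fun u _ => h1 u).trans ?_
    rw [← Finset.mul_sum]
    apply mul_le_mul_of_nonneg_left _ (by positivity)
    rw [Finset.sum_comm]
    have h2 : ∀ k ∈ Finset.range H, ∑ u : Fin m → ZMod H, ∑ v : Fin (k+1) → ZMod H,
        BF.EE H (fun F => if BF.Good F u v then (1:ℝ) else 0) ≤
        (H:ℝ)^m * (768^3 + 1) / (m+1) * (1 / (1 + BF.mu H d (k+1)))^J := by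
      intro k _
      have hmu := BF.mu_nonneg H d (k+1)
      exact BF.per_k hH hsum _ _ (by positivity) (fun x => BF.windows hH x J) hC1
    refine (Finset.sum_le_sum h2).trans ?_
    rw [← Finset.mul_sum]
    gcongr
  refine (Finset.sum_le_sum fun t _ => key t).trans (le_of_eq ?_)
  simp only [Finset.sum_const, Finset.card_univ, ZMod.card, nsmul_eq_mul]
  ring
end
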